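/- arXiv:2108.05195 — 9 statements merged into one kernel-verified Lean document; each statement's English description precedes it below -/
import Mathlib

section
/- The Lebesgue volume of the solid R = {(x,y,z) ∈ ℝ³ : x² + y² − z² ≤ 1, y² + z² − x² ≤ 1, z² + x² − y² ≤ 1} is equal to log 256 (equivalently, 8 log 2). -/
open MeasureTheory Real

/-- The fundamental theorem of calculus for lower Lebesgue integrals. -/
theorem setLIntegral_Ioo_ofReal_of_hasDerivAt {f F : ℝ → ℝ} {a b : ℝ} (hab : a ≤ b)
    (hF : ∀ x ∈ Set.Icc a b, HasDerivAt F (f x) x) (hf : ContinuousOn f (Set.Icc a b))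
    (hf₀ : ∀ x ∈ Set.Icc a b, 0 ≤ f x) :
    ∫⁻ x in Set.Ioo a b, ENNReal.ofReal (f x) = ENNReal.ofReal (F b - F a) := by
  have hint : IntegrableOn f (Set.Ioo a b) :=
    hf.integrableOn_Icc.mono_set Set.Ioo_subset_Icc_self
  rw [← ofReal_integral_eq_lintegral_ofReal hint, ← integral_Ioc_eq_integral_Ioo,
    ← intervalIntegral.integral_of_le hab, intervalIntegral.integral_eq_sub_of_hasDerivAt]
  · rwa [Set.uIcc_of_le hab]
  · exact ContinuousOn.intervalIntegrable_of_Icc hab hf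
  · exact (ae_restrict_iff' measurableSet_Ioo).2
      (.of_forall fun x hx => hf₀ x (Set.Ioo_subset_Icc_self hx))

/-- The kernel of a nonzero linear functional is a null set. -/
theorem volume_linearFunctional_eq_zero (L : ℝ × ℝ × ℝ →ₗ[ℝ] ℝ) (hL : L ≠ 0) :
    volume {p | L p = 0} = 0 :=
  haveI : (volume : Measure (ℝ × ℝ × ℝ)).IsAddHaarMeasure :=
    Measure.prod.instIsAddHaarMeasure (volume : Measure ℝ) (volume : Measure (ℝ × ℝ))
  Measure.addHaar_submodule volume (LinearMap.ker L) (by rwa [Ne, LinearMap.ker_eq_top])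

/-- A set invariant under a reflection has twice the volume of its part in a half-space. -/
theorem volume_eq_two_mul_of_reflection {S : Set (ℝ × ℝ × ℝ)} (hS : MeasurableSet S)
    {T : ℝ × ℝ × ℝ → ℝ × ℝ × ℝ} (hT : MeasurePreserving T) (hTS : T ⁻¹' S = S)
    (L : ℝ × ℝ × ℝ →ₗ[ℝ] ℝ) (hL : L ≠ 0) (hLT : ∀ p, L (T p) = -L p) :
    volume S = 2 * volume (S ∩ {p | 0 < L p}) := by
  have hLm : Measurable L := L.continuous_of_finiteDimensional.measurable
  have hpos : MeasurableSet (S ∩ {p | 0 < L p}) :=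
    hS.inter (measurableSet_lt measurable_const hLm)
  have hneg : volume (S \ {p | 0 < L p}) = volume (S ∩ {p | 0 < L p}) := by
    rw [← hT.measure_preimage hpos.nullMeasurableSet]
    apply measure_congr
    have hne : ∀ᵐ p : ℝ × ℝ × ℝ, L p ≠ 0 := by
      simpa [ae_iff] using volume_linearFunctional_eq_zero L hL
    filter_upwards [hne] with p hp
    have hiff : T p ∈ S ↔ p ∈ S := by rw [← Set.mem_preimage, hTS]
    apply propext
    change (p ∈ S ∧ ¬ 0 < L p) ↔ (T p ∈ S ∧ 0 < L (T p))
    rw [hiff, hLT, not_lt, neg_pos]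
    exact and_congr_right fun _ => ⟨fun h => lt_of_le_of_ne h hp, le_of_lt⟩
  rw [← measure_inter_add_sdiff S (measurableSet_lt measurable_const hLm), hneg, two_mul]

/-- The chamber `0 < z < y < x` of the solid. -/
def hyperboloidChamber : Set (ℝ × ℝ × ℝ) :=
  {p | 0 < p.2.2 ∧ p.2.2 < p.2.1 ∧ p.2.1 < p.1 ∧ p.1 ^ 2 + p.2.1 ^ 2 - p.2.2 ^ 2 ≤ 1}

theorem measurableSet_hyperboloidChamber : MeasurableSet hyperboloidChamber := by
  unfold hyperboloidChamber
  measurability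

theorem lintegral_radial_sq {g : ℝ} (hg : 0 < g) :
    ∫⁻ x in Set.Ioi (0 : ℝ), ENNReal.ofReal (x ^ 2) * (if x ^ 2 * g ≤ 1 then 1 else 0) =
      ENNReal.ofReal (1 / (3 * √g ^ 3)) := by
  have hs : 0 < √g := sqrt_pos.2 hg
  have hiff : ∀ x : ℝ, 0 < x → (x ^ 2 * g ≤ 1 ↔ x ≤ 1 / √g) := by
    intro x hx
    rw [le_div_iff₀ hs, ← abs_of_pos (mul_pos hx hs), ← sq_le_one_iff_abs_le_one, mul_pow,
      sq_sqrt hg.le]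
  have h := setLIntegral_Ioo_ofReal_of_hasDerivAt (f := fun x => x ^ 2) (F := fun x => x ^ 3 / 3)
    (a := 0) (b := 1 / √g) (by positivity)
    (fun x _ => ((hasDerivAt_pow 3 x).div_const 3).congr_deriv (by norm_num))
    (by fun_prop) (fun x _ => sq_nonneg x)
  rw [setLIntegral_congr Ioo_ae_eq_Ioc, ← lintegral_indicator measurableSet_Ioc] at h
  rw [← lintegral_indicator measurableSet_Ioi]
  convert h using 1
  · congr 1 with x
    by_cases hx : 0 < x
    · by_cases hx' : x ≤ 1 / √g
      · rw [Set.indicator_of_mem (Set.mem_Ioi.2 hx), Set.indicator_of_mem (Set.mem_Ioc.2 ⟨hx, hx'⟩),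
          if_pos ((hiff x hx).2 hx'), mul_one]
      · rw [Set.indicator_of_mem (Set.mem_Ioi.2 hx),
          Set.indicator_of_notMem (s := Set.Ioc _ _) (fun h => hx' h.2),
          if_neg (fun h => hx' ((hiff x hx).1 h)), mul_zero]
    · rw [Set.indicator_of_notMem (s := Set.Ioi _) (fun h => hx h),
        Set.indicator_of_notMem (s := Set.Ioc _ _) (fun h => hx h.1)]
  · congr 1
    field_simp
    simp

theorem lintegral_inv_sqrt_cube {a : ℝ} (ha : 0 ≤ a) :
    ∫⁻ b in Set.Ioo 0 a, ENNReal.ofReal (1 / (3 * √(1 + a ^ 2 - b ^ 2) ^ 3)) =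
      ENNReal.ofReal (a / (3 * (1 + a ^ 2))) := by
  have hpos : ∀ b ∈ Set.Icc 0 a, 0 < 1 + a ^ 2 - b ^ 2 := fun b hb => by
    nlinarith [pow_le_pow_left₀ hb.1 hb.2 2]
  rw [setLIntegral_Ioo_ofReal_of_hasDerivAt
    (F := fun b => b / (3 * (1 + a ^ 2) * √(1 + a ^ 2 - b ^ 2))) ha]
  · simp
  · intro b hb
    have hg := hpos b hb
    have hs : 0 < √(1 + a ^ 2 - b ^ 2) := sqrt_pos.2 hg
    have hd := (((hasDerivAt_pow 2 b).const_sub (1 + a ^ 2)).sqrt hg.ne').const_mul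
      (3 * (1 + a ^ 2))
    have h := (hasDerivAt_id b).div hd (by positivity)
    refine h.congr_deriv ?_
    have hsq := sq_sqrt hg.le
    have ha2 : 1 + a ^ 2 = √(1 + a ^ 2 - b ^ 2) ^ 2 + b ^ 2 := by linarith
    have ha3 : 0 < 1 + a ^ 2 := by positivity
    simp only [id]
    field_simp
    norm_num
    linarith
  · refine ContinuousOn.div (by fun_prop) (by fun_prop) fun b hb => ?_
    have := sqrt_pos.2 (hpos b hb)
    positivity
  · intro b _
    positivity

theorem lintegral_div_one_add_sq :
    ∫⁻ a in Set.Ioo (0 : ℝ) 1, ENNReal.ofReal (a / (3 * (1 + a ^ 2))) =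
      ENNReal.ofReal (log 2 / 6) := by
  rw [setLIntegral_Ioo_ofReal_of_hasDerivAt (F := fun a => log (1 + a ^ 2) / 6) zero_le_one]
  · norm_num
  · intro a _
    have ha : 0 < 1 + a ^ 2 := by positivity
    refine ((((hasDerivAt_pow 2 a).const_add 1).log ha.ne').div_const 6).congr_deriv ?_
    field_simp
    norm_num
    ring
  · exact ContinuousOn.div (by fun_prop) (by fun_prop) fun a _ => by positivity
  · intro a ha
    have := ha.1
    positivity

theorem volume_hyperboloidChamber_slice {x : ℝ} (hx : 0 < x) :
    volume (Prod.mk x ⁻¹' hyperboloidChamber) = ENNReal.ofReal (x ^ 2) *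
      ∫⁻ a in Set.Ioo (0 : ℝ) 1, ∫⁻ b in Set.Ioo 0 a,
        if x ^ 2 * (1 + a ^ 2 - b ^ 2) ≤ 1 then 1 else 0 := by
  set Q : Set (ℝ × ℝ) := {q | q.1 ∈ Set.Ioo (0 : ℝ) 1 ∧ q.2 ∈ Set.Ioo 0 q.1 ∧
    x ^ 2 * (1 + q.1 ^ 2 - q.2 ^ 2) ≤ 1} with hQdef
  have hQ : MeasurableSet Q := by
    rw [hQdef]
    simp only [Set.mem_Ioo]
    measurability
  have hslice : Q = (fun q => x • q) ⁻¹' (Prod.mk x ⁻¹' hyperboloidChamber) := by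
    ext ⟨a, b⟩
    have hexp : x ^ 2 + (x * a) ^ 2 - (x * b) ^ 2 = x ^ 2 * (1 + a ^ 2 - b ^ 2) := by ring
    simp only [hQdef, hyperboloidChamber, Set.mem_preimage, Set.mem_ofPred_eq, Set.mem_Ioo,
      Prod.smul_mk, smul_eq_mul, hexp, mul_pos_iff_of_pos_left hx, mul_lt_mul_iff_right₀ hx,
      mul_lt_iff_lt_one_right hx]
    constructor
    · rintro ⟨⟨_, h1⟩, ⟨h2, h3⟩, h4⟩
      exact ⟨h2, h3, h1, h4⟩
    · rintro ⟨h2, h3, h1, h4⟩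
      exact ⟨⟨h2.trans h3, h1⟩, ⟨h2, h3⟩, h4⟩
  have hvol : volume Q = ∫⁻ a in Set.Ioo (0 : ℝ) 1, ∫⁻ b in Set.Ioo 0 a,
        if x ^ 2 * (1 + a ^ 2 - b ^ 2) ≤ 1 then 1 else 0 := by
    rw [Measure.volume_eq_prod, Measure.prod_apply hQ, ← lintegral_indicator measurableSet_Ioo]
    congr 1 with a
    rw [← lintegral_indicator_one (measurable_prodMk_left hQ)]
    by_cases ha : a ∈ Set.Ioo (0 : ℝ) 1
    · rw [Set.indicator_of_mem ha, ← lintegral_indicator measurableSet_Ioo]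
      congr 1 with b
      simp only [Set.indicator, hQdef, Set.mem_preimage, Set.mem_ofPred_eq, ha, true_and, ite_and,
        Pi.one_apply]
    · rw [Set.indicator_of_notMem ha]
      simp only [Set.indicator, hQdef, Set.mem_preimage, Set.mem_ofPred_eq, ha, false_and,
        if_false, lintegral_zero]
  have hscale := Measure.addHaar_preimage_smul (volume : Measure (ℝ × ℝ)) hx.ne'
    (Prod.mk x ⁻¹' hyperboloidChamber)
  rw [← hvol, hslice, hscale, ← mul_assoc, ← ENNReal.ofReal_mul (by positivity)]
  have hone : x ^ 2 * |(x ^ Module.finrank ℝ (ℝ × ℝ))⁻¹| = 1 := by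
    rw [abs_of_pos (by positivity)]
    simp [hx.ne']
  rw [hone, ENNReal.ofReal_one, one_mul]

theorem volume_hyperboloidChamber :
    volume hyperboloidChamber = ENNReal.ofReal (log 2 / 6) := by
  have hmeas : Measurable fun p : ℝ × ℝ × ℝ =>
      ENNReal.ofReal (p.1 ^ 2) * (if p.1 ^ 2 * (1 + p.2.1 ^ 2 - p.2.2 ^ 2) ≤ 1 then 1 else 0) :=
    (by fun_prop : Measurable fun p : ℝ × ℝ × ℝ => ENNReal.ofReal (p.1 ^ 2)).mul
      (Measurable.ite (measurableSet_le (by fun_prop) (by fun_prop)) measurable_const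
        measurable_const)
  set T : Set (ℝ × ℝ) := {q | q.1 ∈ Set.Ioo (0 : ℝ) 1 ∧ q.2 ∈ Set.Ioo 0 q.1} with hTdef
  have hT : MeasurableSet T := by
    rw [hTdef]
    simp only [Set.mem_Ioo]
    measurability
  have htriangle : ∀ f : ℝ × ℝ → ENNReal, Measurable f →
      ∫⁻ q in T, f q = ∫⁻ a in Set.Ioo (0 : ℝ) 1, ∫⁻ b in Set.Ioo 0 a, f (a, b) := by
    intro f hf
    rw [← lintegral_indicator hT, Measure.volume_eq_prod,
      lintegral_prod _ (hf.indicator hT).aemeasurable, ← lintegral_indicator measurableSet_Ioo]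
    congr 1 with a
    by_cases ha : a ∈ Set.Ioo (0 : ℝ) 1
    · rw [Set.indicator_of_mem ha, ← lintegral_indicator measurableSet_Ioo]
      congr 1 with b
      simp only [Set.indicator, hTdef, Set.mem_ofPred_eq, ha, true_and]
    · rw [Set.indicator_of_notMem ha]
      simp only [Set.indicator, hTdef, Set.mem_ofPred_eq, ha, false_and, if_false, lintegral_zero]
  have hslices : volume hyperboloidChamber = ∫⁻ x in Set.Ioi (0 : ℝ), ∫⁻ q in T,
      ENNReal.ofReal (x ^ 2) * (if x ^ 2 * (1 + q.1 ^ 2 - q.2 ^ 2) ≤ 1 then 1 else 0) := by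
    rw [Measure.volume_eq_prod, Measure.prod_apply measurableSet_hyperboloidChamber,
      ← lintegral_indicator measurableSet_Ioi]
    congr 1 with x
    by_cases hx : 0 < x
    · have hm : Measurable fun q : ℝ × ℝ =>
          if x ^ 2 * (1 + q.1 ^ 2 - q.2 ^ 2) ≤ 1 then (1 : ENNReal) else 0 :=
        Measurable.ite (measurableSet_le (by fun_prop) (by fun_prop)) measurable_const
          measurable_const
      rw [Set.indicator_of_mem (Set.mem_Ioi.2 hx), volume_hyperboloidChamber_slice hx,
        lintegral_const_mul _ hm, htriangle _ hm]
    · rw [Set.indicator_of_notMem (s := Set.Ioi _) (fun h => hx h)]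
      convert measure_empty (μ := (volume : Measure (ℝ × ℝ)))
      ext ⟨y, z⟩
      simp only [hyperboloidChamber, Set.mem_preimage, Set.mem_ofPred_eq, Set.mem_empty_iff_false,
        iff_false]
      rintro ⟨h1, h2, h3, _⟩
      exact hx (h1.trans (h2.trans h3))
  have hradial : ∀ q ∈ T, ∫⁻ x in Set.Ioi (0 : ℝ),
      ENNReal.ofReal (x ^ 2) * (if x ^ 2 * (1 + q.1 ^ 2 - q.2 ^ 2) ≤ 1 then 1 else 0) =
        ENNReal.ofReal (1 / (3 * √(1 + q.1 ^ 2 - q.2 ^ 2) ^ 3)) := by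
    rintro ⟨a, b⟩ ⟨_, hb⟩
    exact lintegral_radial_sq (by nlinarith [pow_le_pow_left₀ hb.1.le hb.2.le 2])
  rw [hslices, lintegral_lintegral_swap hmeas.aemeasurable, setLIntegral_congr_fun hT hradial,
    htriangle _ (by fun_prop), ← lintegral_div_one_add_sq]
  exact setLIntegral_congr_fun measurableSet_Ioo fun a ha => lintegral_inv_sqrt_cube ha.1.le

/-- The part of the solid in the open positive octant. -/
def hyperboloidOctant : Set (ℝ × ℝ × ℝ) :=
  {p | (p.1 ^ 2 + p.2.1 ^ 2 - p.2.2 ^ 2 ≤ 1 ∧ p.2.1 ^ 2 + p.2.2 ^ 2 - p.1 ^ 2 ≤ 1 ∧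
    p.2.2 ^ 2 + p.1 ^ 2 - p.2.1 ^ 2 ≤ 1) ∧ 0 < p.1 ∧ 0 < p.2.1 ∧ 0 < p.2.2}

theorem measurableSet_hyperboloidOctant : MeasurableSet hyperboloidOctant := by
  unfold hyperboloidOctant
  measurability

theorem measurePreserving_rotate :
    MeasurePreserving (fun p : ℝ × ℝ × ℝ => (p.2.1, p.2.2, p.1)) :=
  (measurePreserving_prodAssoc (volume : Measure ℝ) (volume : Measure ℝ) (volume : Measure ℝ)).comp
    (Measure.measurePreserving_swap (μ := (volume : Measure ℝ)) (ν := (volume : Measure (ℝ × ℝ))))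

theorem volume_hyperboloidOctant_inter_first_max :
    volume (hyperboloidOctant ∩ {p | p.2.1 < p.1 ∧ p.2.2 < p.1}) =
      2 * volume hyperboloidChamber := by
  have hmeas : MeasurableSet (hyperboloidOctant ∩ {p | p.2.1 < p.1 ∧ p.2.2 < p.1}) :=
    measurableSet_hyperboloidOctant.inter (by measurability)
  have hswap : MeasurePreserving (fun p : ℝ × ℝ × ℝ => (p.1, p.2.2, p.2.1)) :=
    (MeasurePreserving.id (volume : Measure ℝ)).prod
      (Measure.measurePreserving_swap (μ := (volume : Measure ℝ)) (ν := (volume : Measure ℝ)))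
  let L : ℝ × ℝ × ℝ →ₗ[ℝ] ℝ := (LinearMap.fst ℝ ℝ ℝ - LinearMap.snd ℝ ℝ ℝ) ∘ₗ
    LinearMap.snd ℝ ℝ (ℝ × ℝ)
  have hLapp : ∀ p, L p = p.2.1 - p.2.2 := fun p => rfl
  rw [volume_eq_two_mul_of_reflection hmeas hswap ?_ L ?_ ?_]
  · congr 2
    ext ⟨x, y, z⟩
    simp only [hyperboloidOctant, hyperboloidChamber, Set.mem_inter_iff, Set.mem_ofPred_eq, hLapp,
      sub_pos]
    constructor
    · rintro ⟨⟨⟨⟨h1, _, _⟩, _, _, hz⟩, hyx, _⟩, hzy⟩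
      exact ⟨hz, hzy, hyx, h1⟩
    · rintro ⟨hz, hzy, hyx, h1⟩
      refine ⟨⟨⟨⟨h1, ?_, ?_⟩, ?_, ?_, hz⟩, hyx, ?_⟩, hzy⟩ <;> nlinarith
  · ext ⟨x, y, z⟩
    simp only [hyperboloidOctant, Set.mem_preimage, Set.mem_inter_iff, Set.mem_ofPred_eq]
    constructor <;> rintro ⟨⟨⟨h1, h2, h3⟩, hx, hy, hz⟩, h4, h5⟩ <;>
      exact ⟨⟨⟨by linarith, by linarith, by linarith⟩, hx, hz, hy⟩, h5, h4⟩
  · intro h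
    simpa [hLapp] using LinearMap.congr_fun h (0, 1, 0)
  · intro p
    simp [hLapp]

theorem volume_hyperboloidOctant :
    volume hyperboloidOctant = 6 * volume hyperboloidChamber := by
  set ρ : ℝ × ℝ × ℝ → ℝ × ℝ × ℝ := fun p => (p.2.1, p.2.2, p.1) with hρdef
  have hρ : MeasurePreserving ρ := measurePreserving_rotate
  set A : Set (ℝ × ℝ × ℝ) := hyperboloidOctant ∩ {p | p.2.1 < p.1 ∧ p.2.2 < p.1} with hAdef
  have hA : MeasurableSet A := measurableSet_hyperboloidOctant.inter (by measurability)
  have hrot : ∀ p, ρ p ∈ hyperboloidOctant ↔ p ∈ hyperboloidOctant := by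
    rintro ⟨x, y, z⟩
    simp only [hyperboloidOctant, hρdef, Set.mem_ofPred_eq]
    tauto
  have hB : ρ ⁻¹' A = hyperboloidOctant ∩ {p | p.2.2 < p.2.1 ∧ p.1 < p.2.1} := by
    ext p
    simp only [hAdef, Set.mem_preimage, Set.mem_inter_iff, hrot]
    rfl
  have hC : ρ ⁻¹' (ρ ⁻¹' A) = hyperboloidOctant ∩ {p | p.1 < p.2.2 ∧ p.2.1 < p.2.2} := by
    ext p
    rw [hB]
    simp only [Set.mem_preimage, Set.mem_inter_iff, hrot]
    rfl
  have hBm : MeasurableSet (ρ ⁻¹' A) := hρ.measurable hA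
  have hCm : MeasurableSet (ρ ⁻¹' (ρ ⁻¹' A)) := hρ.measurable hBm
  have hne : ∀ᵐ p : ℝ × ℝ × ℝ, p.2.1 ≠ p.2.2 := by
    let L : ℝ × ℝ × ℝ →ₗ[ℝ] ℝ := (LinearMap.fst ℝ ℝ ℝ - LinearMap.snd ℝ ℝ ℝ) ∘ₗ
      LinearMap.snd ℝ ℝ (ℝ × ℝ)
    have hL : L ≠ 0 := fun h => by simpa [L] using LinearMap.congr_fun h (0, 1, 0)
    simpa [ae_iff, L, sub_eq_zero] using volume_linearFunctional_eq_zero L hL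
  have hae : hyperboloidOctant =ᵐ[volume] (A ∪ (ρ ⁻¹' A ∪ ρ ⁻¹' (ρ ⁻¹' A)) : Set _) := by
    filter_upwards [hne, hρ.quasiMeasurePreserving.ae hne,
      (hρ.comp hρ).quasiMeasurePreserving.ae hne] with p h1 h2 h3
    apply propext
    change p ∈ hyperboloidOctant ↔ p ∈ A ∪ (ρ ⁻¹' A ∪ ρ ⁻¹' (ρ ⁻¹' A))
    rw [hC, hB]
    simp only [hρdef, Function.comp_apply] at h2 h3
    simp only [hAdef, Set.mem_union, Set.mem_inter_iff, Set.mem_ofPred_eq, ← and_or_left]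
    refine (and_iff_left ?_).symm
    rcases lt_or_gt_of_ne h1 with h1 | h1 <;> rcases lt_or_gt_of_ne h2 with h2 | h2 <;>
      rcases lt_or_gt_of_ne h3 with h3 | h3 <;> grind
  have hdisj : Disjoint A (ρ ⁻¹' A ∪ ρ ⁻¹' (ρ ⁻¹' A)) := by
    rw [hC, hB, Set.disjoint_left]
    rintro p ⟨_, h1, h2⟩ (⟨_, h3, h4⟩ | ⟨_, h3, h4⟩)
    · exact lt_asymm h1 h4
    · exact lt_asymm h2 h3
  have hdisj' : Disjoint (ρ ⁻¹' A) (ρ ⁻¹' (ρ ⁻¹' A)) := by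
    rw [hC, hB, Set.disjoint_left]
    rintro p ⟨_, h1, _⟩ ⟨_, _, h4⟩
    exact lt_asymm h1 h4
  rw [measure_congr hae, measure_union hdisj (hBm.union hCm), measure_union hdisj' hCm,
    hρ.measure_preimage hBm.nullMeasurableSet, hρ.measure_preimage hA.nullMeasurableSet, hAdef,
    volume_hyperboloidOctant_inter_first_max]
  ring

theorem volume_hyperboloid_solid :
    volume {p : ℝ × ℝ × ℝ |
        p.1 ^ 2 + p.2.1 ^ 2 - p.2.2 ^ 2 ≤ 1 ∧
        p.2.1 ^ 2 + p.2.2 ^ 2 - p.1 ^ 2 ≤ 1 ∧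
        p.2.2 ^ 2 + p.1 ^ 2 - p.2.1 ^ 2 ≤ 1} = ENNReal.ofReal (Real.log 256) := by
  set R : Set (ℝ × ℝ × ℝ) := {p | p.1 ^ 2 + p.2.1 ^ 2 - p.2.2 ^ 2 ≤ 1 ∧
        p.2.1 ^ 2 + p.2.2 ^ 2 - p.1 ^ 2 ≤ 1 ∧ p.2.2 ^ 2 + p.1 ^ 2 - p.2.1 ^ 2 ≤ 1} with hRdef
  have hR : MeasurableSet R := by
    rw [hRdef]
    measurability
  have hid : MeasurePreserving (id : ℝ → ℝ) := MeasurePreserving.id _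
  have hneg : MeasurePreserving (fun x : ℝ => -x) := Measure.measurePreserving_neg _
  let X : ℝ × ℝ × ℝ →ₗ[ℝ] ℝ := LinearMap.fst ℝ ℝ (ℝ × ℝ)
  let Y : ℝ × ℝ × ℝ →ₗ[ℝ] ℝ := LinearMap.fst ℝ ℝ ℝ ∘ₗ LinearMap.snd ℝ ℝ (ℝ × ℝ)
  let Z : ℝ × ℝ × ℝ →ₗ[ℝ] ℝ := LinearMap.snd ℝ ℝ ℝ ∘ₗ LinearMap.snd ℝ ℝ (ℝ × ℝ)
  have hX : X ≠ 0 := fun h => by simpa [X] using LinearMap.congr_fun h (1, 0, 0)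
  have hY : Y ≠ 0 := fun h => by simpa [Y] using LinearMap.congr_fun h (0, 1, 0)
  have hZ : Z ≠ 0 := fun h => by simpa [Z] using LinearMap.congr_fun h (0, 0, 1)
  have hXpos : MeasurableSet {p | 0 < X p} :=
    measurableSet_lt measurable_const X.continuous_of_finiteDimensional.measurable
  have hYpos : MeasurableSet {p | 0 < Y p} :=
    measurableSet_lt measurable_const Y.continuous_of_finiteDimensional.measurable
  have hoct : R ∩ {p | 0 < X p} ∩ {p | 0 < Y p} ∩ {p | 0 < Z p} = hyperboloidOctant := by
    ext p
    simp [hRdef, hyperboloidOctant, X, Y, Z, and_assoc]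
  rw [volume_eq_two_mul_of_reflection hR (hneg.prod (hid.prod hid))
      (by ext p; simp [hRdef]) X hX (fun p => rfl),
    volume_eq_two_mul_of_reflection (hR.inter hXpos) (hid.prod (hneg.prod hid))
      (by ext p; simp [hRdef, X]) Y hY (fun p => rfl),
    volume_eq_two_mul_of_reflection ((hR.inter hXpos).inter hYpos) (hid.prod (hid.prod hneg))
      (by ext p; simp [hRdef, X, Y]) Z hZ (fun p => rfl),
    hoct, volume_hyperboloidOctant, volume_hyperboloidChamber]
  have hlog : log 256 = 48 * (log 2 / 6) := by
    rw [show (256 : ℝ) = 2 ^ 8 by norm_num, log_pow]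
    push_cast
    ring
  rw [hlog, ENNReal.ofReal_mul (by norm_num), ENNReal.ofReal_ofNat]
  ring
end

section
/- The Lebesgue volume of the first-octant piece R₁ = {(x,y,z) ∈ ℝ³ : x ≥ 0, y ≥ 0, z ≥ 0, x² + y² − z² ≤ 1, y² + z² − x² ≤ 1, z² + x² − y² ≤ 1} is equal to log 2. -/
open MeasureTheory Real

/-- An antiderivative of `y ↦ √(y² - b²)`. -/
lemma hasDerivAt_antideriv_sqrt_sq_sub {b y : ℝ} (hb : 0 < b) (hy : b < y) :
    HasDerivAt (fun t : ℝ => t * √(t ^ 2 - b ^ 2) / 2 - b ^ 2 / 2 * log (t + √(t ^ 2 - b ^ 2)))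
      (√(y ^ 2 - b ^ 2)) y := by
  have hpos : 0 < y ^ 2 - b ^ 2 := by nlinarith
  have hs : 0 < √(y ^ 2 - b ^ 2) := Real.sqrt_pos.2 hpos
  have hsq : √(y ^ 2 - b ^ 2) ^ 2 = y ^ 2 - b ^ 2 := Real.sq_sqrt hpos.le
  have hsum : 0 < y + √(y ^ 2 - b ^ 2) := by linarith
  have hd : HasDerivAt (fun t : ℝ => √(t ^ 2 - b ^ 2)) (y / √(y ^ 2 - b ^ 2)) y := by
    have h := (((hasDerivAt_id y).pow 2).sub_const (b ^ 2)).sqrt hpos.ne'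
    refine h.congr_deriv ?_
    simp
    field_simp
  have h := (((hasDerivAt_id y).mul hd).div_const 2).sub
    ((((hasDerivAt_id y).add hd).log hsum.ne').const_mul (b ^ 2 / 2))
  refine h.congr_deriv ?_
  simp only [id, Pi.add_apply]
  generalize √(y ^ 2 - b ^ 2) = s at *
  have hb2 : b ^ 2 = y ^ 2 - s ^ 2 := by linarith
  rw [hb2]
  field_simp
  ring

lemma integral_sqrt_sq_add_sq_sub_one {x : ℝ} (hx : x ∈ Set.Ioo (0 : ℝ) 1) :
    ∫ y in (0 : ℝ)..1, √(x ^ 2 + y ^ 2 - 1) =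
      x / 2 - (1 - x ^ 2) / 4 * (log (1 + x) - log (1 - x)) := by
  obtain ⟨hx0, hx1⟩ := hx
  have hpos : 0 < 1 - x ^ 2 := by nlinarith
  set b := √(1 - x ^ 2) with hbdef
  have hb : 0 < b := Real.sqrt_pos.2 hpos
  have hb2 : b ^ 2 = 1 - x ^ 2 := Real.sq_sqrt hpos.le
  have hb1 : b ≤ 1 := by nlinarith
  have hf : (fun y : ℝ => √(x ^ 2 + y ^ 2 - 1)) = fun y => √(y ^ 2 - b ^ 2) := by
    funext y; rw [hb2]; congr 1; ring
  have hcont : Continuous fun y : ℝ => √(y ^ 2 - b ^ 2) := by fun_prop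
  have hzero : ∫ y in (0 : ℝ)..b, √(y ^ 2 - b ^ 2) = 0 := by
    refine intervalIntegral.integral_zero_ae (.of_forall fun y hy => ?_)
    rw [Set.uIoc_of_le hb.le] at hy
    exact Real.sqrt_eq_zero_of_nonpos (by nlinarith [hy.1, hy.2])
  have hlog : log b = (log (1 + x) + log (1 - x)) / 2 := by
    rw [hbdef, Real.log_sqrt hpos.le, ← Real.log_mul (by linarith) (by linarith)]
    congr 2; ring
  rw [hf, ← intervalIntegral.integral_add_adjacent_intervals
    (hcont.intervalIntegrable 0 b) (hcont.intervalIntegrable b 1), hzero,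
    intervalIntegral.integral_eq_sub_of_hasDerivAt_of_le hb1 ?_
      (fun y hy => hasDerivAt_antideriv_sqrt_sq_sub hb hy.1) (hcont.intervalIntegrable b 1)]
  · have h1 : √((1 : ℝ) ^ 2 - b ^ 2) = x := by
      rw [hb2, show (1 : ℝ) ^ 2 - (1 - x ^ 2) = x ^ 2 by ring, Real.sqrt_sq hx0.le]
    rw [h1, sub_self, Real.sqrt_zero, add_zero, hlog, hb2]
    ring
  · refine ContinuousOn.sub (by fun_prop) (continuousOn_const.mul
      (ContinuousOn.log (by fun_prop) fun y hy => ?_))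
    have := Real.sqrt_nonneg (y ^ 2 - b ^ 2)
    have := hy.1
    linarith

lemma integral_sub_one_sub_sq_mul_log :
    ∫ x in (0 : ℝ)..1, (x / 2 - (1 - x ^ 2) / 4 * (log (1 + x) - log (1 - x))) =
      (1 - log 2) / 3 := by
  have hlog : ContinuousOn (fun x : ℝ => log (1 + x)) (Set.Icc 0 1) :=
    ContinuousOn.log (by fun_prop) fun x hx => by linarith [hx.1]
  have hmul : Continuous fun x : ℝ => (1 - x) * log (1 - x) :=
    Real.continuous_mul_log.comp (continuous_const.sub continuous_id)
  rw [intervalIntegral.integral_eq_sub_of_hasDerivAt_of_le zero_le_one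
    (f := fun x => x ^ 2 / 3 - 1 / 12 * ((x + 1) ^ 2 * (2 - x) * log (1 + x)
      + (1 - x) * (x + 2) * ((1 - x) * log (1 - x))))]
  · norm_num
    ring
  · fun_prop
  · intro x hx
    have h1 : 0 < 1 + x := by linarith [hx.1]
    have h2 : 0 < 1 - x := by linarith [hx.2]
    have hid := hasDerivAt_id x
    have hl1 := (hid.const_add 1).log h1.ne'
    have hl2 := (hid.const_sub 1).log h2.ne'
    have h := ((hid.pow 2).div_const 3).sub
      ((((((hid.add_const 1).pow 2).mul (hid.const_sub 2)).mul hl1).add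
        (((hid.const_sub 1).mul (hid.add_const 2)).mul
          ((hid.const_sub 1).mul hl2))).const_mul (1 / 12))
    refine h.congr_deriv ?_
    simp only [id, Pi.mul_apply, Pi.pow_apply]
    field_simp
    ring
  · refine ContinuousOn.intervalIntegrable ?_
    rw [Set.uIcc_of_le zero_le_one]
    have : (fun x : ℝ => x / 2 - (1 - x ^ 2) / 4 * (log (1 + x) - log (1 - x))) =
        fun x => x / 2 - (1 - x ^ 2) / 4 * log (1 + x)
          + (1 + x) / 4 * ((1 - x) * log (1 - x)) := by
      funext x; ring
    rw [this]
    fun_prop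

/-- The part of the unit cube cut off by the hyperboloid `x² + y² - z² = 1`. -/
def hyperboloidCap : Set (ℝ × ℝ × ℝ) :=
  {p | p.1 ∈ Set.Icc 0 1 ∧ p.2.1 ∈ Set.Icc 0 1 ∧ p.2.2 ∈ Set.Icc 0 1 ∧
    1 < p.1 ^ 2 + p.2.1 ^ 2 - p.2.2 ^ 2}

lemma measurableSet_hyperboloidCap : MeasurableSet hyperboloidCap := by
  unfold hyperboloidCap
  simp only [Set.mem_Icc]
  measurability

lemma volume_hyperboloidCap_slice {x y : ℝ} (hx : x ∈ Set.Icc (0 : ℝ) 1)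
    (hy : y ∈ Set.Icc (0 : ℝ) 1) :
    volume {z : ℝ | (x, y, z) ∈ hyperboloidCap} = ENNReal.ofReal √(x ^ 2 + y ^ 2 - 1) := by
  have : {z : ℝ | (x, y, z) ∈ hyperboloidCap} = Set.Ico 0 √(x ^ 2 + y ^ 2 - 1) := by
    ext z
    simp only [hyperboloidCap, Set.mem_ofPred_eq, Set.mem_Ico]
    constructor
    · rintro ⟨-, -, hz, h⟩
      exact ⟨hz.1, Real.lt_sqrt_of_sq_lt (by linarith)⟩
    · rintro ⟨hz, h⟩
      have h' := (Real.lt_sqrt hz).1 h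
      have := hx.1; have := hx.2; have := hy.1; have := hy.2
      exact ⟨hx, hy, ⟨hz, by nlinarith⟩, by linarith⟩
  rw [this, Real.volume_Ico, sub_zero]

lemma lintegral_Icc_ofReal_of_continuous {f : ℝ → ℝ} (hf : Continuous f) (h0 : ∀ x, 0 ≤ f x) :
    ∫⁻ x in Set.Icc (0 : ℝ) 1, ENNReal.ofReal (f x) =
      ENNReal.ofReal (∫ x in (0 : ℝ)..1, f x) := by
  rw [intervalIntegral.integral_of_le zero_le_one, ← integral_Icc_eq_integral_Ioc,
    ofReal_integral_eq_lintegral_ofReal hf.continuousOn.integrableOn_Icc (.of_forall h0)]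

lemma volume_hyperboloidCap : volume hyperboloidCap = ENNReal.ofReal ((1 - log 2) / 3) := by
  have hslice (x : ℝ) : volume (Prod.mk x ⁻¹' hyperboloidCap) =
      (Set.Icc (0 : ℝ) 1).indicator
        (fun x => ENNReal.ofReal (∫ y in (0 : ℝ)..1, √(x ^ 2 + y ^ 2 - 1))) x := by
    by_cases hx : x ∈ Set.Icc (0 : ℝ) 1
    · rw [Set.indicator_of_mem hx, ← lintegral_Icc_ofReal_of_continuous (by fun_prop)
        (fun y => Real.sqrt_nonneg _), ← lintegral_indicator measurableSet_Icc,
        Measure.volume_eq_prod,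
        Measure.prod_apply (measurable_prodMk_left measurableSet_hyperboloidCap)]
      refine lintegral_congr fun y => ?_
      by_cases hy : y ∈ Set.Icc (0 : ℝ) 1
      · rw [Set.indicator_of_mem hy, ← volume_hyperboloidCap_slice hx hy]
        rfl
      · rw [Set.indicator_of_notMem hy]
        convert measure_empty (μ := (volume : Measure ℝ))
        ext z
        simp only [hyperboloidCap, Set.mem_preimage, Set.mem_ofPred_eq, hy]
        simp
    · rw [Set.indicator_of_notMem hx]
      convert measure_empty (μ := (volume : Measure (ℝ × ℝ)))
      ext z
      simp only [hyperboloidCap, Set.mem_preimage, Set.mem_ofPred_eq, hx]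
      simp
  rw [Measure.volume_eq_prod, Measure.prod_apply measurableSet_hyperboloidCap,
    lintegral_congr hslice, lintegral_indicator measurableSet_Icc,
    lintegral_Icc_ofReal_of_continuous
      (intervalIntegral.continuous_parametric_intervalIntegral_of_continuous' (by fun_prop) 0 1)
      (fun x => intervalIntegral.integral_nonneg zero_le_one fun y _ => Real.sqrt_nonneg _),
    ← integral_sub_one_sub_sq_mul_log]
  congr 1
  rw [intervalIntegral.integral_of_le zero_le_one, intervalIntegral.integral_of_le zero_le_one,
    integral_Ioc_eq_integral_Ioo, integral_Ioc_eq_integral_Ioo]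
  exact setIntegral_congr_fun measurableSet_Ioo fun x hx => integral_sqrt_sq_add_sq_sub_one hx

lemma measurePreserving_cyclic :
    MeasurePreserving (fun p : ℝ × ℝ × ℝ => (p.2.1, p.2.2, p.1)) volume volume :=
  (volume_preserving_prodAssoc (α₁ := ℝ) (β₁ := ℝ) (γ₁ := ℝ)).comp
    (Measure.measurePreserving_swap (μ := (volume : Measure ℝ)) (ν := (volume : Measure (ℝ × ℝ))))

theorem volume_first_octant_piece :
    volume {p : ℝ × ℝ × ℝ |
        0 ≤ p.1 ∧ 0 ≤ p.2.1 ∧ 0 ≤ p.2.2 ∧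
        p.1 ^ 2 + p.2.1 ^ 2 - p.2.2 ^ 2 ≤ 1 ∧
        p.2.1 ^ 2 + p.2.2 ^ 2 - p.1 ^ 2 ≤ 1 ∧
        p.2.2 ^ 2 + p.1 ^ 2 - p.2.1 ^ 2 ≤ 1} = ENNReal.ofReal (Real.log 2) := by
  set σ : ℝ × ℝ × ℝ → ℝ × ℝ × ℝ := fun p => (p.2.1, p.2.2, p.1) with hσ
  have hσm : MeasurePreserving σ volume volume := measurePreserving_cyclic
  have hm₁ := measurableSet_hyperboloidCap
  have hm₂ := hσm.measurable hm₁
  have hm₃ := hσm.measurable hm₂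
  have hv₂ : volume (σ ⁻¹' hyperboloidCap) = volume hyperboloidCap :=
    hσm.measure_preimage hm₁.nullMeasurableSet
  have hv₃ : volume (σ ⁻¹' (σ ⁻¹' hyperboloidCap)) = volume hyperboloidCap :=
    (hσm.measure_preimage hm₂.nullMeasurableSet).trans hv₂
  set cube : Set (ℝ × ℝ × ℝ) := Set.Icc 0 1 ×ˢ Set.Icc 0 1 ×ˢ Set.Icc 0 1 with hcube
  have hvc : volume cube = 1 := by
    simp only [hcube, Measure.volume_eq_prod, Measure.prod_prod, Real.volume_Icc, sub_zero,
      ENNReal.ofReal_one, mul_one]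
  have hd₂₃ : Disjoint (σ ⁻¹' hyperboloidCap) (σ ⁻¹' (σ ⁻¹' hyperboloidCap)) := by
    rw [Set.disjoint_left]
    rintro ⟨x, y, z⟩ ⟨hy, hz, hx, h⟩ ⟨-, -, -, h'⟩
    simp only [hσ, Set.mem_Icc] at *
    nlinarith
  have hd₁ : Disjoint hyperboloidCap
      (σ ⁻¹' hyperboloidCap ∪ σ ⁻¹' (σ ⁻¹' hyperboloidCap)) := by
    rw [Set.disjoint_left]
    rintro ⟨x, y, z⟩ ⟨hx, hy, hz, h⟩ (⟨-, -, -, h'⟩ | ⟨-, -, -, h'⟩) <;>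
    · simp only [hσ, Set.mem_Icc] at *
      nlinarith
  have hsub : hyperboloidCap ∪ (σ ⁻¹' hyperboloidCap ∪ σ ⁻¹' (σ ⁻¹' hyperboloidCap)) ⊆ cube := by
    rintro ⟨x, y, z⟩ (⟨hx, hy, hz, -⟩ | ⟨hy, hz, hx, -⟩ | ⟨hz, hx, hy, -⟩) <;>
    exact ⟨hx, hy, hz⟩
  have hset : {p : ℝ × ℝ × ℝ |
        0 ≤ p.1 ∧ 0 ≤ p.2.1 ∧ 0 ≤ p.2.2 ∧
        p.1 ^ 2 + p.2.1 ^ 2 - p.2.2 ^ 2 ≤ 1 ∧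
        p.2.1 ^ 2 + p.2.2 ^ 2 - p.1 ^ 2 ≤ 1 ∧
        p.2.2 ^ 2 + p.1 ^ 2 - p.2.1 ^ 2 ≤ 1} =
      cube \ (hyperboloidCap ∪ (σ ⁻¹' hyperboloidCap ∪ σ ⁻¹' (σ ⁻¹' hyperboloidCap))) := by
    ext ⟨x, y, z⟩
    simp only [hcube, hσ, hyperboloidCap, Set.mem_sdiff, Set.mem_union, Set.mem_preimage,
      Set.mem_ofPred_eq, Set.mem_prod, Set.mem_Icc]
    constructor
    · rintro ⟨hx, hy, hz, h₁, h₂, h₃⟩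
      refine ⟨⟨⟨hx, by nlinarith⟩, ⟨hy, by nlinarith⟩, ⟨hz, by nlinarith⟩⟩, ?_⟩
      rintro (⟨-, -, -, h⟩ | ⟨-, -, -, h⟩ | ⟨-, -, -, h⟩) <;> linarith
    · rintro ⟨⟨hx, hy, hz⟩, h⟩
      simp only [hx, hy, hz, and_self, true_and, not_or, not_lt] at h
      exact ⟨hx.1, hy.1, hz.1, h⟩
  have hlog : log 2 ≤ 1 := by linarith [Real.log_le_sub_one_of_pos (x := 2) two_pos]
  have hW : 0 ≤ (1 - log 2) / 3 := by linarith
  rw [hset, measure_sdiff hsub (hm₁.union (hm₂.union hm₃)).nullMeasurableSet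
    (measure_ne_top_of_subset hsub (by simp [hvc])),
    measure_union hd₁ (hm₂.union hm₃), measure_union hd₂₃ hm₃, hv₂, hv₃, hvc,
    volume_hyperboloidCap, ← ENNReal.ofReal_add hW hW, ← ENNReal.ofReal_add hW (by positivity),
    ← ENNReal.ofReal_one, ← ENNReal.ofReal_sub _ (by positivity)]
  congr 1
  ring
end

section
/- The Lebesgue volume of the curved solid S₂ = {(x,y,z) ∈ ℝ³ : 0 ≤ y ≤ x ≤ 1, 1 − x + y ≤ z ≤ √(1 + y² − x²)} is equal to (log 2)/3 − 1/6. -/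
open MeasureTheory Real

/-- An antiderivative of `y ↦ √(c + y²)` for `c > 0`. -/
lemma hasDerivAt_sqrt_add_sq_antideriv {c : ℝ} (hc : 0 < c) (y : ℝ) :
    HasDerivAt (fun y => y / 2 * √(c + y ^ 2) + c / 2 * log (y + √(c + y ^ 2)))
      (√(c + y ^ 2)) y := by
  have hpos : 0 < c + y ^ 2 := by positivity
  have hs : 0 < √(c + y ^ 2) := Real.sqrt_pos.2 hpos
  have hsq : √(c + y ^ 2) ^ 2 = c + y ^ 2 := Real.sq_sqrt hpos.le
  have hlog : 0 < y + √(c + y ^ 2) := by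
    have : |y| < √(c + y ^ 2) := by
      rw [← Real.sqrt_sq_eq_abs]
      exact Real.sqrt_lt_sqrt (sq_nonneg y) (by linarith)
    linarith [neg_abs_le y]
  have hd : HasDerivAt (fun y : ℝ => √(c + y ^ 2)) (2 * y / (2 * √(c + y ^ 2))) y := by
    refine HasDerivAt.sqrt ?_ hpos.ne'
    simpa using (hasDerivAt_pow 2 y).const_add c
  refine ((((hasDerivAt_id y).div_const 2).mul hd).add
    ((((hasDerivAt_id y).add hd).log hlog.ne').const_mul (c / 2))).congr_deriv ?_
  simp only [id, Pi.add_apply]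
  generalize √(c + y ^ 2) = s at *
  have hc' : c = s ^ 2 - y ^ 2 := by linarith
  subst hc'
  field_simp
  ring

/-- The area of the slice of the solid at abscissa `x`. -/
noncomputable def sliceArea (x : ℝ) : ℝ :=
  (1 - x ^ 2) / 4 * (log (1 + x) - log (1 - x)) - x / 2 + x ^ 2 / 2

lemma integral_sqrt_sub_eq_sliceArea {x : ℝ} (h0 : 0 < x) (h1 : x < 1) :
    ∫ y in (0 : ℝ)..x, (√(1 + y ^ 2 - x ^ 2) - (1 - x + y)) = sliceArea x := by
  have hc : 0 < 1 - x ^ 2 := by nlinarith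
  have hd : ∀ y ∈ Set.uIcc 0 x, HasDerivAt
      (fun y => y / 2 * √(1 - x ^ 2 + y ^ 2) + (1 - x ^ 2) / 2 * log (y + √(1 - x ^ 2 + y ^ 2))
        - ((1 - x) * y + y ^ 2 / 2))
      (√(1 + y ^ 2 - x ^ 2) - (1 - x + y)) y := by
    intro y _
    have hpoly : HasDerivAt (fun y : ℝ => (1 - x) * y + y ^ 2 / 2) (1 - x + y) y :=
      (((hasDerivAt_id y).const_mul (1 - x)).add ((hasDerivAt_pow 2 y).div_const 2)).congr_deriv
        (by simp)
    rw [show 1 + y ^ 2 - x ^ 2 = 1 - x ^ 2 + y ^ 2 by ring]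
    exact (hasDerivAt_sqrt_add_sq_antideriv hc y).sub hpoly
  rw [intervalIntegral.integral_eq_sub_of_hasDerivAt hd
    (Continuous.intervalIntegrable (by fun_prop) _ _)]
  have hlog : log (√(1 - x ^ 2)) = (log (1 + x) + log (1 - x)) / 2 := by
    rw [Real.log_sqrt hc.le, show 1 - x ^ 2 = (1 + x) * (1 - x) by ring,
      Real.log_mul (by linarith) (by linarith)]
  simp only [sub_add_cancel, Real.sqrt_one, ne_eq, OfNat.ofNat_ne_zero, not_false_eq_true,
    zero_pow, add_zero, zero_add, hlog, sliceArea, add_comm x 1]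
  ring

lemma hasDerivAt_sliceArea_antideriv {x : ℝ} (h0 : 0 < x) (h1 : x < 1) :
    HasDerivAt (fun x => (2 - x) / 12 * (1 + x) * ((1 + x) * log (1 + x))
      + (x + 2) / 12 * (1 - x) * ((1 - x) * log (1 - x)) - x ^ 2 / 3 + x ^ 3 / 6)
      (sliceArea x) x := by
  have ha : HasDerivAt (fun x : ℝ => 1 + x) 1 x := (hasDerivAt_id x).const_add 1
  have hb : HasDerivAt (fun x : ℝ => 1 - x) (-1) x := (hasDerivAt_id x).const_sub 1
  have hp : (1 + x) ≠ 0 := by linarith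
  have hm : (1 - x) ≠ 0 := by linarith
  have h2 : HasDerivAt (fun x : ℝ => (2 - x) / 12) (-1 / 12) x :=
    ((hasDerivAt_id x).const_sub 2).div_const 12
  have h3 : HasDerivAt (fun x : ℝ => (x + 2) / 12) (1 / 12) x :=
    ((hasDerivAt_id x).add_const 2).div_const 12
  refine (((((h2.mul ha).mul (ha.mul (ha.log hp))).add
    ((h3.mul hb).mul (hb.mul (hb.log hm)))).sub ((hasDerivAt_pow 2 x).div_const 3)).add
    ((hasDerivAt_pow 3 x).div_const 6)).congr_deriv ?_
  simp only [sliceArea, Pi.mul_apply]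
  field_simp
  ring

lemma continuous_sliceArea : Continuous sliceArea := by
  have hp : Continuous fun x : ℝ => (1 + x) * log (1 + x) :=
    Real.continuous_mul_log.comp (continuous_const.add continuous_id)
  have hm : Continuous fun x : ℝ => (1 - x) * log (1 - x) :=
    Real.continuous_mul_log.comp (continuous_const.sub continuous_id)
  have : sliceArea = fun x => (1 - x) / 4 * ((1 + x) * log (1 + x))
      - (1 + x) / 4 * ((1 - x) * log (1 - x)) - x / 2 + x ^ 2 / 2 := by
    ext x
    simp only [sliceArea]
    ring
  rw [this]
  fun_prop

lemma integral_sliceArea : ∫ x in (0 : ℝ)..1, sliceArea x = log 2 / 3 - 1 / 6 := by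
  have hp : Continuous fun x : ℝ => (1 + x) * log (1 + x) :=
    Real.continuous_mul_log.comp (continuous_const.add continuous_id)
  have hm : Continuous fun x : ℝ => (1 - x) * log (1 - x) :=
    Real.continuous_mul_log.comp (continuous_const.sub continuous_id)
  rw [intervalIntegral.integral_eq_sub_of_hasDerivAt_of_le zero_le_one
    (Continuous.continuousOn (by fun_prop))
    (fun x hx => hasDerivAt_sliceArea_antideriv hx.1 hx.2)
    (continuous_sliceArea.intervalIntegrable _ _)]
  norm_num
  ring

lemma one_sub_add_le_sqrt {x y : ℝ} (hyx : y ≤ x) (hx : x ≤ 1) :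
    1 - x + y ≤ √(1 + y ^ 2 - x ^ 2) :=
  Real.le_sqrt_of_sq_le (by nlinarith [mul_nonneg (sub_nonneg.2 hx) (sub_nonneg.2 hyx)])

lemma sliceArea_nonneg {x : ℝ} (h0 : 0 < x) (h1 : x < 1) : 0 ≤ sliceArea x := by
  rw [← integral_sqrt_sub_eq_sliceArea h0 h1]
  exact intervalIntegral.integral_nonneg h0.le
    fun y hy => sub_nonneg.2 (one_sub_add_le_sqrt hy.2 h1.le)

lemma volume_slice {x : ℝ} (h0 : 0 < x) (h1 : x < 1) :
    volume {q : ℝ × ℝ | 0 ≤ q.1 ∧ q.1 ≤ x ∧ 1 - x + q.1 ≤ q.2 ∧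
      q.2 ≤ √(1 + q.1 ^ 2 - x ^ 2)} = ENNReal.ofReal (sliceArea x) := by
  have hmeas : MeasurableSet {q : ℝ × ℝ | 0 ≤ q.1 ∧ q.1 ≤ x ∧ 1 - x + q.1 ≤ q.2 ∧
      q.2 ≤ √(1 + q.1 ^ 2 - x ^ 2)} := by
    measurability
  rw [Measure.volume_eq_prod, Measure.prod_apply hmeas]
  have hslice : ∀ y : ℝ, volume (Prod.mk y ⁻¹' {q : ℝ × ℝ | 0 ≤ q.1 ∧ q.1 ≤ x ∧
      1 - x + q.1 ≤ q.2 ∧ q.2 ≤ √(1 + q.1 ^ 2 - x ^ 2)}) =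
      (Set.Icc 0 x).indicator
        (fun y => ENNReal.ofReal (√(1 + y ^ 2 - x ^ 2) - (1 - x + y))) y := by
    intro y
    by_cases hy : y ∈ Set.Icc 0 x
    · rw [Set.indicator_of_mem hy, ← Real.volume_Icc]
      congr 1
      ext z
      simp [hy.1, hy.2]
    · rw [Set.indicator_of_notMem hy]
      convert measure_empty (μ := (volume : Measure ℝ))
      ext z
      simp only [Set.mem_preimage, Set.mem_ofPred_eq, Set.mem_empty_iff_false, iff_false]
      exact fun h => hy ⟨h.1, h.2.1⟩
  simp_rw [hslice]
  rw [lintegral_indicator measurableSet_Icc, ← ofReal_integral_eq_lintegral_ofReal,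
    integral_Icc_eq_integral_Ioc, ← intervalIntegral.integral_of_le h0.le,
    integral_sqrt_sub_eq_sliceArea h0 h1]
  · exact Continuous.integrableOn_Icc (by fun_prop)
  · filter_upwards [ae_restrict_mem measurableSet_Icc] with y hy
    exact sub_nonneg.2 (one_sub_add_le_sqrt hy.2 h1.le)

theorem volume_curved_piece :
    volume {p : ℝ × ℝ × ℝ |
        0 ≤ p.2.1 ∧ p.2.1 ≤ p.1 ∧ p.1 ≤ 1 ∧
        1 - p.1 + p.2.1 ≤ p.2.2 ∧ p.2.2 ≤ Real.sqrt (1 + p.2.1 ^ 2 - p.1 ^ 2)} =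
      ENNReal.ofReal (Real.log 2 / 3 - 1 / 6) := by
  set S := {p : ℝ × ℝ × ℝ |
        0 ≤ p.2.1 ∧ p.2.1 ≤ p.1 ∧ p.1 ≤ 1 ∧
        1 - p.1 + p.2.1 ≤ p.2.2 ∧ p.2.2 ≤ Real.sqrt (1 + p.2.1 ^ 2 - p.1 ^ 2)} with hS
  have hmeas : MeasurableSet S := by
    measurability
  rw [Measure.volume_eq_prod, Measure.prod_apply hmeas]
  have hslice : (fun x : ℝ => volume (Prod.mk x ⁻¹' S)) =ᵐ[volume]
      (Set.Ioo 0 1).indicator (fun x => ENNReal.ofReal (sliceArea x)) := by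
    filter_upwards [Measure.ae_ne volume (0 : ℝ), Measure.ae_ne volume (1 : ℝ)] with x hx0 hx1
    by_cases hx : x ∈ Set.Ioo (0 : ℝ) 1
    · rw [Set.indicator_of_mem hx, ← volume_slice hx.1 hx.2]
      congr 1
      ext q
      simp [hS, hx.2.le]
    · rw [Set.indicator_of_notMem hx]
      convert measure_empty (μ := (volume : Measure (ℝ × ℝ)))
      ext q
      simp only [hS, Set.mem_preimage, Set.mem_ofPred_eq, Set.mem_empty_iff_false, iff_false]
      exact fun h => hx ⟨(h.1.trans h.2.1).lt_of_ne' hx0, h.2.2.1.lt_of_ne hx1⟩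
  rw [lintegral_congr_ae hslice, lintegral_indicator measurableSet_Ioo,
    ← ofReal_integral_eq_lintegral_ofReal, ← integral_Ioc_eq_integral_Ioo,
    ← intervalIntegral.integral_of_le zero_le_one, integral_sliceArea]
  · exact continuous_sliceArea.integrableOn_Icc.mono_set Set.Ioo_subset_Icc_self
  · filter_upwards [ae_restrict_mem measurableSet_Ioo] with x hx
    exact sliceArea_nonneg hx.1 hx.2
end

section
/- The iterated integral I = ∫₀¹ ∫_y¹ ( √(1 + y² − x²) − (1 − x + y) ) dx dy is equal to (log 2)/3 − 1/6. -/
open Real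

/-- A primitive of `x ↦ √(a - x ^ 2)` on the open interval where `a - x ^ 2` is positive. -/
lemma hasDerivAt_primitive_sqrt_sub_sq {a x : ℝ} (h : 0 < a - x ^ 2) :
    HasDerivAt (fun x : ℝ => (x * √(a - x ^ 2) + a * arctan (x / √(a - x ^ 2))) / 2)
      √(a - x ^ 2) x := by
  have hs : 0 < √(a - x ^ 2) := sqrt_pos.mpr h
  have hsq : √(a - x ^ 2) ^ 2 = a - x ^ 2 := sq_sqrt h.le
  have hd : HasDerivAt (fun x : ℝ => √(a - x ^ 2)) (-(2 * x) / (2 * √(a - x ^ 2))) x := by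
    have h1 : HasDerivAt (fun x : ℝ => a - x ^ 2) (-(2 * x)) x := by
      simpa using (hasDerivAt_pow 2 x).const_sub a
    exact h1.sqrt h.ne'
  have hid := hasDerivAt_id' x
  refine (((hid.mul hd).add (((hid.div hd hs.ne').arctan).const_mul a)).div_const 2).congr_deriv ?_
  rw [Pi.div_apply]
  generalize √(a - x ^ 2) = s at hs hsq ⊢
  obtain rfl : a = s ^ 2 + x ^ 2 := by linarith
  have : s ^ 2 + x ^ 2 ≠ 0 := by positivity
  field_simp
  ring

lemma integral_sqrt_one_add_sq_sub_sq {y : ℝ} (hy : 0 < y) (hy1 : y ≤ 1) :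
    ∫ x in y..1, √(1 + y ^ 2 - x ^ 2) = (1 + y ^ 2) / 2 * (π / 2 - 2 * arctan y) := by
  rw [intervalIntegral.integral_eq_sub_of_hasDerivAt (fun x hx =>
    hasDerivAt_primitive_sqrt_sub_sq (a := 1 + y ^ 2) ?_)
    (Continuous.intervalIntegrable (by fun_prop) _ _)]
  · have h1 : 1 + y ^ 2 - 1 ^ 2 = y ^ 2 := by ring
    have h2 : 1 + y ^ 2 - y ^ 2 = 1 := by ring
    rw [h1, h2, sqrt_sq hy.le, sqrt_one, one_div, arctan_inv_of_pos hy, div_one]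
    ring
  · rw [Set.uIcc_of_le hy1] at hx
    nlinarith [hx.1, hx.2]

lemma integral_sqrt_sub_linear {y : ℝ} (hy : 0 < y) (hy1 : y ≤ 1) :
    ∫ x in y..1, (√(1 + y ^ 2 - x ^ 2) - (1 - x + y)) =
      (1 + y ^ 2) * (π / 4 - arctan y) - (1 - y ^ 2) / 2 := by
  have hlin : ∫ x in y..1, (1 - x + y) = (1 - y ^ 2) / 2 := by
    rw [intervalIntegral.integral_eq_sub_of_hasDerivAt
      (f := fun x => x - x ^ 2 / 2 + y * x) (fun x _ => ?_)
      (Continuous.intervalIntegrable (by fun_prop) _ _)]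
    · ring
    · have hid := hasDerivAt_id' x
      refine ((hid.sub ((hasDerivAt_pow 2 x).div_const 2)).add
        (hid.const_mul y)).congr_deriv ?_
      norm_num
  rw [intervalIntegral.integral_sub (Continuous.intervalIntegrable (by fun_prop) _ _)
    (Continuous.intervalIntegrable (by fun_prop) _ _), integral_sqrt_one_add_sq_sub_sq hy hy1, hlin]
  ring

theorem iterated_integral_curved_piece :
    ∫ y in (0:ℝ)..1, ∫ x in y..1, (Real.sqrt (1 + y ^ 2 - x ^ 2) - (1 - x + y)) =
      Real.log 2 / 3 - 1 / 6 := by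
  rw [intervalIntegral.integral_congr_ae (g := fun y =>
    (1 + y ^ 2) * (π / 4 - arctan y) - (1 - y ^ 2) / 2) (.of_forall fun y hy => ?_)]
  · rw [intervalIntegral.integral_eq_sub_of_hasDerivAt
      (f := fun y => (y + y ^ 3 / 3) * (π / 4 - arctan y) + y ^ 2 / 6 + log (1 + y ^ 2) / 3
        - y / 2 + y ^ 3 / 6) (fun y _ => ?_)
      (Continuous.intervalIntegrable (by fun_prop) _ _)]
    · norm_num
      ring
    · have hid := hasDerivAt_id' y
      have h2 := hasDerivAt_pow 2 y
      have h3 := hasDerivAt_pow 3 y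
      have hpos : 1 + y ^ 2 ≠ 0 := by positivity
      refine ((((((hid.add (h3.div_const 3)).mul ((hasDerivAt_arctan y).const_sub (π / 4))).add
        (h2.div_const 6)).add (((h2.const_add 1).log hpos).div_const 3)).sub
        (hid.div_const 2)).add (h3.div_const 6)).congr_deriv ?_
      simp
      field_simp
      ring
  · rw [Set.uIoc_of_le zero_le_one] at hy
    exact integral_sqrt_sub_linear hy.1 hy.2
end

section
/- The iterated integral I₁ = ∫₀¹ ∫_y¹ √(1 + y² − x²) dx dy is equal to (log 2)/3 + 1/6. -/
open Real

/-- The circular-segment antiderivative of `√(1 + y² - x²)`, in terms of `arctan`. -/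
lemma hasDerivAt_sqrt_segment (y x : ℝ) (h : 0 < 1 + y ^ 2 - x ^ 2) :
    HasDerivAt (fun t : ℝ => (t * √(1 + y ^ 2 - t ^ 2) +
      (1 + y ^ 2) * arctan (t / √(1 + y ^ 2 - t ^ 2))) / 2) √(1 + y ^ 2 - x ^ 2) x := by
  have hs : 0 < √(1 + y ^ 2 - x ^ 2) := Real.sqrt_pos.2 h
  have hsq : √(1 + y ^ 2 - x ^ 2) ^ 2 = 1 + y ^ 2 - x ^ 2 := Real.sq_sqrt h.le
  have hd := (((hasDerivAt_id x).pow 2).const_sub (1 + y ^ 2)).sqrt h.ne'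
  have hF := (((hasDerivAt_id x).mul hd).add
    ((((hasDerivAt_id x).div hd hs.ne').arctan).const_mul (1 + y ^ 2))).div_const 2
  refine hF.congr_deriv ?_
  simp only [id, Pi.pow_apply, Pi.div_apply]
  generalize √(1 + y ^ 2 - x ^ 2) = s at hs hsq
  have hy : 1 + y ^ 2 = s ^ 2 + x ^ 2 := by linarith
  have hpos : s ^ 2 + x ^ 2 ≠ 0 := by positivity
  rw [hy]
  have h1 : 1 + (x / s) ^ 2 = (s ^ 2 + x ^ 2) / s ^ 2 := by field_simp
  rw [h1]
  field_simp
  push_cast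
  ring

lemma integral_sqrt_segment {y : ℝ} (hy0 : 0 < y) (hy1 : y ≤ 1) :
    ∫ x in y..1, √(1 + y ^ 2 - x ^ 2) = (1 + y ^ 2) * (π / 4 - arctan y) := by
  rw [intervalIntegral.integral_eq_sub_of_hasDerivAt
    (fun x hx => hasDerivAt_sqrt_segment y x ?_)
    (Continuous.intervalIntegrable (by fun_prop) _ _)]
  · have h1 : √(1 + y ^ 2 - 1 ^ 2) = y := by
      rw [one_pow, add_sub_cancel_left, Real.sqrt_sq hy0.le]
    rw [h1, add_sub_cancel_right, Real.sqrt_one, one_div, arctan_inv_of_pos hy0, div_one]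
    ring
  · rw [Set.uIcc_of_le hy1] at hx
    nlinarith [hx.1, hx.2]

lemma hasDerivAt_primitive_one_add_sq_mul_arctan (y : ℝ) :
    HasDerivAt (fun t : ℝ => (t + t ^ 3 / 3) * (π / 4 - arctan t) + t ^ 2 / 6 +
      log (1 + t ^ 2) / 3) ((1 + y ^ 2) * (π / 4 - arctan y)) y := by
  have hpos : 1 + y ^ 2 ≠ 0 := by positivity
  have hF := ((((hasDerivAt_id y).add ((hasDerivAt_pow 3 y).div_const 3)).mul
    ((hasDerivAt_arctan y).const_sub (π / 4))).add ((hasDerivAt_pow 2 y).div_const 6)).add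
    ((((hasDerivAt_pow 2 y).const_add 1).log hpos).div_const 3)
  refine hF.congr_deriv ?_
  simp only [id, Pi.add_apply]
  field_simp
  push_cast
  ring

theorem iterated_integral_sqrt_part :
    ∫ y in (0:ℝ)..1, ∫ x in y..1, Real.sqrt (1 + y ^ 2 - x ^ 2) =
      Real.log 2 / 3 + 1 / 6 := by
  have hinner : ∀ y ∈ Set.uIoc (0 : ℝ) 1,
      ∫ x in y..1, √(1 + y ^ 2 - x ^ 2) = (1 + y ^ 2) * (π / 4 - arctan y) := by
    intro y hy
    rw [Set.uIoc_of_le zero_le_one] at hy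
    exact integral_sqrt_segment hy.1 hy.2
  rw [intervalIntegral.integral_congr_ae (Filter.Eventually.of_forall hinner),
    intervalIntegral.integral_eq_sub_of_hasDerivAt
      (fun y _ => hasDerivAt_primitive_one_add_sq_mul_arctan y)
      (Continuous.intervalIntegrable (by fun_prop) _ _)]
  norm_num [arctan_one]
  ring
end

section
/- The integral ∫₀¹ ((1 + y²)/2) · ( arcsin(1/√(1 + y²)) − arcsin(y/√(1 + y²)) ) dy is equal to (log 2)/3 + 1/6. -/
open Real

/-- For `y ≥ 0`, the angle with sine `1 / √(1 + y ^ 2)` is complementary to `arctan y`. -/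
lemma arcsin_one_div_sqrt_one_add_sq {y : ℝ} (hy : 0 ≤ y) :
    arcsin (1 / √(1 + y ^ 2)) = π / 2 - arctan y := by
  rw [arctan_eq_arccos hy, arccos, one_div]
  ring

/-- An antiderivative of `(1 + y ^ 2) / 2 * (π / 2 - 2 * arctan y)`. -/
lemma hasDerivAt_arctan_primitive (y : ℝ) :
    HasDerivAt
      (fun y : ℝ => (y / 2 + y ^ 3 / 6) * (π / 2 - 2 * arctan y) + y ^ 2 / 6 +
        log (1 + y ^ 2) / 3)
      ((1 + y ^ 2) / 2 * (π / 2 - 2 * arctan y)) y := by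
  have hpos : 1 + y ^ 2 ≠ 0 := by positivity
  have hcubic := ((hasDerivAt_id' y).div_const 2).add ((hasDerivAt_pow 3 y).div_const 6)
  have hangle := ((hasDerivAt_arctan y).const_mul 2).const_sub (π / 2)
  have hlog := (((hasDerivAt_pow 2 y).const_add 1).log hpos).div_const 3
  refine (((hcubic.mul hangle).add ((hasDerivAt_pow 2 y).div_const 6)).add hlog).congr_deriv ?_
  simp only [Pi.add_apply]
  push_cast
  field_simp
  ring

theorem integral_arcsin_difference :
    ∫ y in (0:ℝ)..1,
        ((1 + y ^ 2) / 2) *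
          (Real.arcsin (1 / Real.sqrt (1 + y ^ 2)) -
            Real.arcsin (y / Real.sqrt (1 + y ^ 2))) =
      Real.log 2 / 3 + 1 / 6 := by
  have hcongr : Set.EqOn
      (fun y : ℝ => (1 + y ^ 2) / 2 * (arcsin (1 / √(1 + y ^ 2)) - arcsin (y / √(1 + y ^ 2))))
      (fun y : ℝ => (1 + y ^ 2) / 2 * (π / 2 - 2 * arctan y)) (Set.uIcc 0 1) := by
    intro y hy
    rw [Set.uIcc_of_le zero_le_one] at hy
    simp only [arcsin_one_div_sqrt_one_add_sq hy.1, ← arctan_eq_arcsin]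
    ring
  rw [intervalIntegral.integral_congr hcongr,
    intervalIntegral.integral_eq_sub_of_hasDerivAt (fun y _ => hasDerivAt_arctan_primitive y)
      (Continuous.intervalIntegrable (by fun_prop) 0 1)]
  norm_num [arctan_one]
  ring_nf
end

section
/- The integral (1/2) ∫₀¹ ( (z² + 1)(π/2 − 2 arctan z) + z² − 1 ) dz is equal to (log 2)/3 − 1/6. -/
open Real

/-- An antiderivative of the integrand of `li_integral`. -/
lemma hasDerivAt_li_antiderivative (z : ℝ) :
    HasDerivAt (fun z : ℝ => (z ^ 3 / 3 + z) * (π / 2 - 2 * Real.arctan z) + z ^ 2 / 3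
        + 2 / 3 * Real.log (1 + z ^ 2) + z ^ 3 / 3 - z)
      ((z ^ 2 + 1) * (π / 2 - 2 * Real.arctan z) + z ^ 2 - 1) z := by
  have hne : (1 : ℝ) + z ^ 2 ≠ 0 := by positivity
  have hid := hasDerivAt_id' z
  have hcube := (hasDerivAt_pow 3 z).div_const 3
  have hsq := hasDerivAt_pow 2 z
  have harctan := ((Real.hasDerivAt_arctan z).const_mul 2).const_sub (π / 2)
  have hlog := ((hsq.const_add 1).log hne).const_mul (2 / 3)
  refine (((((hcube.add hid).mul harctan).add (hsq.div_const 3)).add hlog).add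
    hcube |>.sub hid).congr_deriv ?_
  simp only [Pi.add_apply]
  field_simp
  push_cast
  ring

theorem li_integral :
    (1 / 2) * ∫ z in (0:ℝ)..1,
        ((z ^ 2 + 1) * (π / 2 - 2 * Real.arctan z) + z ^ 2 - 1) =
      Real.log 2 / 3 - 1 / 6 := by
  rw [intervalIntegral.integral_eq_sub_of_hasDerivAt
    (fun z _ => hasDerivAt_li_antiderivative z)
    (Continuous.intervalIntegrable (by fun_prop) _ _)]
  norm_num [Real.arctan_one]
  ring
end

section
/- The first-octant solid R₁ = {(x,y,z) ∈ ℝ³ : x ≥ 0, y ≥ 0, z ≥ 0, x² + y² − z² ≤ 1, y² + z² − x² ≤ 1, z² + x² − y² ≤ 1} has Lebesgue volume equal to 1/6 + 1/3 + 3·((log 2)/3 − 1/6); that is, Vol(R₁) = 3I + 1/2 where I = (log 2)/3 − 1/6 is the volume of one curved piece. -/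
open MeasureTheory Real

/-- Exchanging the last two coordinates preserves volume. -/
lemma volume_setOf_swap_snd (P : ℝ → ℝ → ℝ → Prop) :
    volume {p : ℝ × ℝ × ℝ | P p.1 p.2.2 p.2.1} = volume {p : ℝ × ℝ × ℝ | P p.1 p.2.1 p.2.2} := by
  have h : MeasurePreserving ((MeasurableEquiv.refl ℝ).prodCongr
      (MeasurableEquiv.prodComm : ℝ × ℝ ≃ᵐ ℝ × ℝ)) volume volume :=
    (MeasurePreserving.id volume).prod Measure.measurePreserving_swap
  exact h.measure_preimage_equiv {p : ℝ × ℝ × ℝ | P p.1 p.2.1 p.2.2}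

/-- Exchanging the first two coordinates preserves volume. -/
lemma volume_setOf_swap_fst (P : ℝ → ℝ → ℝ → Prop) :
    volume {p : ℝ × ℝ × ℝ | P p.2.1 p.1 p.2.2} = volume {p : ℝ × ℝ × ℝ | P p.1 p.2.1 p.2.2} := by
  have assoc : MeasurePreserving (MeasurableEquiv.prodAssoc : (ℝ × ℝ) × ℝ ≃ᵐ ℝ × ℝ × ℝ)
      volume volume := measurePreserving_prodAssoc volume volume volume
  have swap : MeasurePreserving ((MeasurableEquiv.prodComm : ℝ × ℝ ≃ᵐ ℝ × ℝ).prodCongr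
      (MeasurableEquiv.refl ℝ)) volume volume :=
    Measure.measurePreserving_swap.prod (MeasurePreserving.id volume)
  rw [← assoc.measure_preimage_equiv, ← assoc.measure_preimage_equiv, ← swap.measure_preimage_equiv]
  rfl

/-- Almost every point of `ℝ³` has pairwise distinct coordinates. -/
lemma ae_pairwise_ne_coordinates :
    ∀ᵐ p : ℝ × ℝ × ℝ, p.1 ≠ p.2.1 ∧ p.1 ≠ p.2.2 ∧ p.2.1 ≠ p.2.2 := by
  have : (volume : Measure (ℝ × ℝ)).IsAddHaarMeasure :=
    inferInstanceAs ((volume : Measure ℝ).prod volume).IsAddHaarMeasure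
  have : (volume : Measure (ℝ × ℝ × ℝ)).IsAddHaarMeasure :=
    inferInstanceAs ((volume : Measure ℝ).prod volume).IsAddHaarMeasure
  have key (f : ℝ × ℝ × ℝ →ₗ[ℝ] ℝ) (hf : f ≠ 0) : ∀ᵐ p : ℝ × ℝ × ℝ, f p ≠ 0 := by
    have := Measure.addHaar_submodule (volume : Measure (ℝ × ℝ × ℝ)) (LinearMap.ker f)
      (by rwa [Ne, LinearMap.ker_eq_top])
    rw [ae_iff]
    simp only [not_not]
    exact this
  let X : ℝ × ℝ × ℝ →ₗ[ℝ] ℝ := LinearMap.fst ℝ ℝ (ℝ × ℝ)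
  let Y : ℝ × ℝ × ℝ →ₗ[ℝ] ℝ := LinearMap.fst ℝ ℝ ℝ ∘ₗ LinearMap.snd ℝ ℝ (ℝ × ℝ)
  let Z : ℝ × ℝ × ℝ →ₗ[ℝ] ℝ := LinearMap.snd ℝ ℝ ℝ ∘ₗ LinearMap.snd ℝ ℝ (ℝ × ℝ)
  have hXY : X - Y ≠ 0 := fun h => by simpa [X, Y] using LinearMap.congr_fun h (1, 0, 0)
  have hXZ : X - Z ≠ 0 := fun h => by simpa [X, Z] using LinearMap.congr_fun h (1, 0, 0)
  have hYZ : Y - Z ≠ 0 := fun h => by simpa [Y, Z] using LinearMap.congr_fun h (0, 1, 0)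
  filter_upwards [key _ hXY, key _ hXZ, key _ hYZ] with p h₁ h₂ h₃
  exact ⟨sub_ne_zero.mp h₁, sub_ne_zero.mp h₂, sub_ne_zero.mp h₃⟩

lemma measurableSet_ordered_and_le_one {α : Type*} [MeasurableSpace α] {f g h k : α → ℝ}
    (hf : Measurable f) (hg : Measurable g) (hh : Measurable h) (hk : Measurable k) :
    MeasurableSet {p | 0 ≤ h p ∧ h p < g p ∧ g p < f p ∧ k p ≤ 1} :=
  (measurableSet_le measurable_const hh).inter ((measurableSet_lt hh hg).inter
    ((measurableSet_lt hg hf).inter (measurableSet_le hk measurable_const)))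

lemma lintegral_Ioc_ofReal_sq {c : ℝ} (hc : 0 ≤ c) :
    ∫⁻ x in Set.Ioc 0 c, ENNReal.ofReal (x ^ 2) = ENNReal.ofReal (c ^ 3 / 3) := by
  rw [← ofReal_integral_eq_lintegral_ofReal
      (((continuous_pow 2).intervalIntegrable 0 c).1) (ae_of_all _ fun x => sq_nonneg x),
    ← intervalIntegral.integral_of_le hc, integral_pow]
  norm_num

/-- Rescaling the last two coordinates by the first one, followed by Tonelli. -/
lemma volume_chamber_eq_lintegral :
    volume {p : ℝ × ℝ × ℝ | 0 ≤ p.2.2 ∧ p.2.2 < p.2.1 ∧ p.2.1 < p.1 ∧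
        p.1 ^ 2 + p.2.1 ^ 2 - p.2.2 ^ 2 ≤ 1} =
      ∫⁻ s in Set.Ioo (0 : ℝ) 1, ∫⁻ t in Set.Ico 0 s,
        ENNReal.ofReal ((√(1 + s ^ 2 - t ^ 2))⁻¹ ^ 3 / 3) := by
  set S := {p : ℝ × ℝ × ℝ | 0 ≤ p.2.2 ∧ p.2.2 < p.2.1 ∧ p.2.1 < p.1 ∧
        p.1 ^ 2 + p.2.1 ^ 2 - p.2.2 ^ 2 ≤ 1}
  let T := {p : ℝ × ℝ × ℝ | 0 ≤ p.2.2 ∧ p.2.2 < p.2.1 ∧ p.2.1 < 1 ∧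
        p.1 ^ 2 * (1 + p.2.1 ^ 2 - p.2.2 ^ 2) ≤ 1}
  have hSm : MeasurableSet S :=
    measurableSet_ordered_and_le_one (by fun_prop) (by fun_prop) (by fun_prop) (by fun_prop)
  have hTm : MeasurableSet T :=
    measurableSet_ordered_and_le_one (by fun_prop) (by fun_prop) (by fun_prop) (by fun_prop)
  have hslice (x : ℝ) (hx : 0 < x) :
      volume (Prod.mk x ⁻¹' S) = ENNReal.ofReal (x ^ 2) * volume (Prod.mk x ⁻¹' T) := by
    have hpre : Prod.mk x ⁻¹' S = (x⁻¹ • ·) ⁻¹' (Prod.mk x ⁻¹' T) := by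
      ext ⟨y, z⟩
      have e : x ^ 2 * (1 + (x⁻¹ * y) ^ 2 - (x⁻¹ * z) ^ 2) = x ^ 2 + y ^ 2 - z ^ 2 := by
        field_simp
      simp only [S, T, Set.mem_preimage, Set.mem_ofPred_eq, Prod.smul_mk, smul_eq_mul, e]
      rw [mul_nonneg_iff_of_pos_left (inv_pos.mpr hx), mul_lt_mul_iff_right₀ (inv_pos.mpr hx),
        inv_mul_lt_iff₀ hx, mul_one]
    rw [hpre, Measure.addHaar_preimage_smul _ (inv_ne_zero hx.ne')]
    congr 2
    simp
  let ν : Measure ℝ :=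
    (volume.restrict (Set.Ioi 0)).withDensity fun x => ENNReal.ofReal (x ^ 2)
  have hdens : Measurable fun x : ℝ => ENNReal.ofReal (x ^ 2) := by fun_prop
  have htonelli : volume S = (ν.prod volume) T := by
    rw [Measure.volume_eq_prod, Measure.prod_apply hSm, Measure.prod_apply hTm,
      lintegral_withDensity_eq_lintegral_mul _ hdens (measurable_measure_prodMk_left hTm),
      ← lintegral_indicator measurableSet_Ioi]
    refine lintegral_congr fun x => ?_
    by_cases hx : 0 < x
    · simpa [hx] using hslice x hx
    · have : Prod.mk x ⁻¹' S = ∅ := by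
        ext ⟨y, z⟩
        simp only [S, Set.mem_preimage, Set.mem_ofPred_eq, Set.mem_empty_iff_false, iff_false]
        intro h
        linarith [h.1, h.2.1, h.2.2.1]
      simp [hx, this]
  have hfiber (s t : ℝ) : ν ((fun x => (x, s, t)) ⁻¹' T) =
      (Set.Ioo (0 : ℝ) 1).indicator (fun s => (Set.Ico 0 s).indicator (fun t =>
        ENNReal.ofReal ((√(1 + s ^ 2 - t ^ 2))⁻¹ ^ 3 / 3)) t) s := by
    by_cases h : 0 ≤ t ∧ t < s ∧ s < 1
    · obtain ⟨ht, hts, hs⟩ := h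
      have hpos : 0 < 1 + s ^ 2 - t ^ 2 := by nlinarith
      rw [Set.indicator_of_mem (show s ∈ Set.Ioo (0 : ℝ) 1 from ⟨ht.trans_lt hts, hs⟩),
        Set.indicator_of_mem (show t ∈ Set.Ico 0 s from ⟨ht, hts⟩),
        ← lintegral_Ioc_ofReal_sq (by positivity),
        withDensity_apply _ (hTm.preimage (by fun_prop)), Measure.restrict_restrict
          (hTm.preimage (by fun_prop))]
      congr 2
      ext x
      simp only [T, Set.mem_inter_iff, Set.mem_preimage, Set.mem_ofPred_eq, ht, hts, hs, true_and,
        Set.mem_Ioi, Set.mem_Ioc]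
      rw [and_comm]
      refine and_congr_right fun hx => ?_
      rw [← Real.sqrt_inv, Real.le_sqrt hx.le (by positivity), ← one_div, le_div_iff₀ hpos]
    · have hempty : (fun x => (x, s, t)) ⁻¹' T = ∅ := by
        ext x
        simp only [T, Set.mem_preimage, Set.mem_ofPred_eq, Set.mem_empty_iff_false, iff_false]
        exact fun hx => h ⟨hx.1, hx.2.1, hx.2.2.1⟩
      rw [hempty, measure_empty]
      by_cases hs : s ∈ Set.Ioo (0 : ℝ) 1
      · rw [Set.indicator_of_mem hs, Set.indicator_of_notMem]
        exact fun ht => h ⟨ht.1, ht.2, hs.2⟩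
      · rw [Set.indicator_of_notMem hs]
  rw [htonelli, Measure.prod_apply_symm hTm, Measure.volume_eq_prod,
    lintegral_prod _ (measurable_measure_prodMk_right hTm).aemeasurable,
    ← lintegral_indicator measurableSet_Ioo]
  refine lintegral_congr fun s => ?_
  simp only [hfiber]
  by_cases hs : s ∈ Set.Ioo (0 : ℝ) 1
  · simp only [Set.indicator_of_mem hs]
    exact lintegral_indicator measurableSet_Ico _
  · simp [Set.indicator_of_notMem hs]

lemma lintegral_Ico_ofReal_inv_sqrt_cube {s : ℝ} (hs : 0 < s) :
    ∫⁻ t in Set.Ico 0 s, ENNReal.ofReal ((√(1 + s ^ 2 - t ^ 2))⁻¹ ^ 3 / 3) =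
      ENNReal.ofReal (s / (1 + s ^ 2) / 3) := by
  have hpos (t : ℝ) (ht : t ∈ Set.uIcc 0 s) : 0 < 1 + s ^ 2 - t ^ 2 := by
    rw [Set.uIcc_of_le hs.le] at ht
    nlinarith [ht.1, ht.2]
  have hint : IntervalIntegrable (fun t => (√(1 + s ^ 2 - t ^ 2))⁻¹ ^ 3 / 3) volume 0 s := by
    refine ContinuousOn.intervalIntegrable ?_
    refine ContinuousOn.div_const (ContinuousOn.pow (ContinuousOn.inv₀ (by fun_prop) ?_) 3) 3
    exact fun t ht => (Real.sqrt_pos.mpr (hpos t ht)).ne'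
  have hderiv (t : ℝ) (ht : t ∈ Set.uIcc 0 s) :
      HasDerivAt (fun t => t / ((1 + s ^ 2) * √(1 + s ^ 2 - t ^ 2)) / 3)
        ((√(1 + s ^ 2 - t ^ 2))⁻¹ ^ 3 / 3) t := by
    have hp := hpos t ht
    have hr := Real.sqrt_pos.mpr hp
    have hinner : HasDerivAt (fun t : ℝ => 1 + s ^ 2 - t ^ 2) (-(2 * t)) t := by
      simpa using (hasDerivAt_pow 2 t).const_sub (1 + s ^ 2)
    have h := ((hasDerivAt_id t).div ((hinner.sqrt hp.ne').const_mul (1 + s ^ 2))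
      (by positivity)).div_const 3
    refine h.congr_deriv ?_
    have hsq := Real.sq_sqrt hp.le
    simp only [id]
    generalize √(1 + s ^ 2 - t ^ 2) = r at hr hsq
    have hs2 : 1 + s ^ 2 = r ^ 2 + t ^ 2 := by linarith
    have : 0 < r ^ 2 + t ^ 2 := by positivity
    rw [hs2]
    field_simp
    ring
  rw [restrict_Ico_eq_restrict_Ioc, ← ofReal_integral_eq_lintegral_ofReal hint.1
    (ae_of_all _ fun t => by positivity), ← intervalIntegral.integral_of_le hs.le,
    intervalIntegral.integral_eq_sub_of_hasDerivAt hderiv hint]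
  simp

lemma lintegral_Ioo_ofReal_div_one_add_sq :
    ∫⁻ s in Set.Ioo (0 : ℝ) 1, ENNReal.ofReal (s / (1 + s ^ 2) / 3) =
      ENNReal.ofReal (Real.log 2 / 6) := by
  have hpos (s : ℝ) : 0 < 1 + s ^ 2 := by positivity
  have hint : IntervalIntegrable (fun s : ℝ => s / (1 + s ^ 2) / 3) volume 0 1 :=
    Continuous.intervalIntegrable
      ((continuous_id.div (by fun_prop) fun s => (hpos s).ne').div_const 3) _ _
  have hderiv (s : ℝ) (_ : s ∈ Set.uIcc (0 : ℝ) 1) :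
      HasDerivAt (fun s => Real.log (1 + s ^ 2) / 6) (s / (1 + s ^ 2) / 3) s := by
    have hinner : HasDerivAt (fun s : ℝ => 1 + s ^ 2) (2 * s) s := by
      simpa using (hasDerivAt_pow 2 s).const_add 1
    refine ((hinner.log (hpos s).ne').div_const 6).congr_deriv ?_
    ring
  have hnonneg : 0 ≤ᵐ[volume.restrict (Set.Ioc (0 : ℝ) 1)] fun s => s / (1 + s ^ 2) / 3 := by
    filter_upwards [ae_restrict_mem measurableSet_Ioc] with s hs
    have := hs.1
    simp only [Pi.zero_apply]
    positivity
  rw [restrict_Ioo_eq_restrict_Ioc, ← ofReal_integral_eq_lintegral_ofReal hint.1 hnonneg,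
    ← intervalIntegral.integral_of_le zero_le_one,
    intervalIntegral.integral_eq_sub_of_hasDerivAt hderiv hint]
  norm_num

/-- The part of the solid in the Weyl chamber `0 ≤ z < y < x`. -/
lemma volume_chamber :
    volume {p : ℝ × ℝ × ℝ | 0 ≤ p.2.2 ∧ p.2.2 < p.2.1 ∧ p.2.1 < p.1 ∧
        p.1 ^ 2 + p.2.1 ^ 2 - p.2.2 ^ 2 ≤ 1} = ENNReal.ofReal (Real.log 2 / 6) := by
  rw [volume_chamber_eq_lintegral, ← lintegral_Ioo_ofReal_div_one_add_sq]
  exact setLIntegral_congr_fun measurableSet_Ioo fun s hs =>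
    lintegral_Ico_ofReal_inv_sqrt_cube hs.1

theorem volume_first_octant_decomposition :
    volume {p : ℝ × ℝ × ℝ |
        0 ≤ p.1 ∧ 0 ≤ p.2.1 ∧ 0 ≤ p.2.2 ∧
        p.1 ^ 2 + p.2.1 ^ 2 - p.2.2 ^ 2 ≤ 1 ∧
        p.2.1 ^ 2 + p.2.2 ^ 2 - p.1 ^ 2 ≤ 1 ∧
        p.2.2 ^ 2 + p.1 ^ 2 - p.2.1 ^ 2 ≤ 1} =
      ENNReal.ofReal (1 / 6 + 1 / 3 + 3 * (Real.log 2 / 3 - 1 / 6)) := by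
  let Q (x y z : ℝ) : Prop := 0 ≤ z ∧ z < y ∧ y < x ∧ x ^ 2 + y ^ 2 - z ^ 2 ≤ 1
  have hmeas {f g h : ℝ × ℝ × ℝ → ℝ} (hf : Measurable f) (hg : Measurable g)
      (hh : Measurable h) : MeasurableSet {p | Q (f p) (g p) (h p)} :=
    measurableSet_ordered_and_le_one (by fun_prop) (by fun_prop) (by fun_prop) (by fun_prop)
  have hxyz : volume {p : ℝ × ℝ × ℝ | Q p.1 p.2.1 p.2.2} = ENNReal.ofReal (Real.log 2 / 6) :=
    volume_chamber
  have hxzy := (volume_setOf_swap_snd Q).trans hxyz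
  have hyxz := (volume_setOf_swap_fst Q).trans hxyz
  have hyzx := (volume_setOf_swap_fst fun x y z => Q x z y).trans hxzy
  have hzxy := (volume_setOf_swap_snd fun x y z => Q y x z).trans hyxz
  have hzyx := (volume_setOf_swap_fst fun x y z => Q z x y).trans hzxy
  have hunion : ({p : ℝ × ℝ × ℝ | 0 ≤ p.1 ∧ 0 ≤ p.2.1 ∧ 0 ≤ p.2.2 ∧
        p.1 ^ 2 + p.2.1 ^ 2 - p.2.2 ^ 2 ≤ 1 ∧
        p.2.1 ^ 2 + p.2.2 ^ 2 - p.1 ^ 2 ≤ 1 ∧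
        p.2.2 ^ 2 + p.1 ^ 2 - p.2.1 ^ 2 ≤ 1} : Set (ℝ × ℝ × ℝ)) =ᵐ[volume]
      ({p | Q p.1 p.2.1 p.2.2} ∪ ({p | Q p.1 p.2.2 p.2.1} ∪ ({p | Q p.2.1 p.1 p.2.2} ∪
        ({p | Q p.2.1 p.2.2 p.1} ∪ ({p | Q p.2.2 p.1 p.2.1} ∪ {p | Q p.2.2 p.2.1 p.1})))) :
        Set (ℝ × ℝ × ℝ)) := by
    filter_upwards [ae_pairwise_ne_coordinates] with p hp
    obtain ⟨x, y, z⟩ := p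
    obtain ⟨hxy, hxz, hyz⟩ := hp
    refine propext ?_
    change (0 ≤ x ∧ 0 ≤ y ∧ 0 ≤ z ∧ x ^ 2 + y ^ 2 - z ^ 2 ≤ 1 ∧ y ^ 2 + z ^ 2 - x ^ 2 ≤ 1 ∧
      z ^ 2 + x ^ 2 - y ^ 2 ≤ 1) ↔
      (Q x y z ∨ Q x z y ∨ Q y x z ∨ Q y z x ∨ Q z x y ∨ Q z y x)
    simp only [Q]
    constructor
    · rintro ⟨hx, hy, hz, h₁, h₂, h₃⟩
      rcases lt_or_gt_of_ne hxy with hxy | hxy <;> rcases lt_or_gt_of_ne hxz with hxz | hxz <;>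
        rcases lt_or_gt_of_ne hyz with hyz | hyz <;> grind
    · rintro (⟨h₀, h₁, h₂, h₃⟩ | ⟨h₀, h₁, h₂, h₃⟩ | ⟨h₀, h₁, h₂, h₃⟩ | ⟨h₀, h₁, h₂, h₃⟩ |
        ⟨h₀, h₁, h₂, h₃⟩ | ⟨h₀, h₁, h₂, h₃⟩) <;>
      · have := pow_lt_pow_left₀ h₁ h₀ two_ne_zero
        have := pow_lt_pow_left₀ h₂ (h₀.trans h₁.le) two_ne_zero
        refine ⟨?_, ?_, ?_, ?_, ?_, ?_⟩ <;> linarith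
  rw [measure_congr hunion, measure_union, measure_union, measure_union, measure_union,
    measure_union, hxyz, hxzy, hyxz, hyzx, hzxy, hzyx]
  · repeat rw [← ENNReal.ofReal_add (by positivity) (by positivity)]
    congr 1
    ring
  all_goals first
    | repeat' refine .union ?_ ?_
      all_goals exact hmeas (by fun_prop) (by fun_prop) (by fun_prop)
    | rw [Set.disjoint_left]
      rintro ⟨x, y, z⟩
      simp only [Q, Set.mem_ofPred_eq, Set.mem_union]
      grind
end

section
/- For every angle θ with 0 < θ ≤ π/2, the Lebesgue volume of the intersection of the two solid cylinders {(x,y,z) ∈ ℝ³ : y² + z² ≤ 1} and {(x,y,z) ∈ ℝ³ : (x sin θ − y cos θ)² + z² ≤ 1}, whose axes meet at angle θ, is 16/(3 sin θ); in particular it is two thirds of the volume 8/sin θ of the circumscribed parallelepiped (box). -/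
open MeasureTheory Real

/-- The interval of `x` with `|x * s - a| ≤ r` has length `2 * r / s`. -/
lemma volume_abs_mul_sub_le {s : ℝ} (hs : 0 < s) (a r : ℝ) :
    volume {x : ℝ | |x * s - a| ≤ r} = ENNReal.ofReal (2 * r / s) := by
  have h : {x : ℝ | |x * s - a| ≤ r} = Set.Icc ((a - r) / s) ((a + r) / s) := by
    ext x
    simp only [Set.mem_ofPred_eq, Set.mem_Icc, div_le_iff₀ hs, le_div_iff₀ hs, abs_le]
    constructor <;> rintro ⟨h₁, h₂⟩ <;> constructor <;> linarith
  rw [h, Real.volume_Icc]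
  congr 1
  ring

/-- Cavalieri's principle for a solid whose slice at height `z ∈ T` is the parallelogram
`|y| ≤ r z`, `|x * s - y * c| ≤ r z`. -/
lemma volume_parallelogram_slices {s : ℝ} (hs : 0 < s) (c : ℝ) {r : ℝ → ℝ} (hr : Measurable r)
    (hr0 : ∀ z, 0 ≤ r z) {T : Set ℝ} (hT : MeasurableSet T) :
    volume {p : ℝ × ℝ × ℝ | p.2.2 ∈ T ∧ |p.2.1| ≤ r p.2.2 ∧ |p.1 * s - p.2.1 * c| ≤ r p.2.2} =
      ∫⁻ z in T, ENNReal.ofReal (4 * r z ^ 2 / s) := by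
  have hS : MeasurableSet {p : ℝ × ℝ × ℝ |
      p.2.2 ∈ T ∧ |p.2.1| ≤ r p.2.2 ∧ |p.1 * s - p.2.1 * c| ≤ r p.2.2} := by
    refine (hT.preimage (by fun_prop : Measurable fun p : ℝ × ℝ × ℝ => p.2.2)).inter
      (MeasurableSet.inter ?_ ?_)
    · exact measurableSet_le (f := fun p : ℝ × ℝ × ℝ => |p.2.1|) (g := fun p => r p.2.2)
        (by fun_prop) (by fun_prop)
    · exact measurableSet_le (f := fun p : ℝ × ℝ × ℝ => |p.1 * s - p.2.1 * c|)
        (g := fun p => r p.2.2) (by fun_prop) (by fun_prop)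
  have hB : MeasurableSet {q : ℝ × ℝ | q.2 ∈ T ∧ |q.1| ≤ r q.2} :=
    (hT.preimage measurable_snd).inter (measurableSet_le (f := fun q : ℝ × ℝ => |q.1|)
      (g := fun q => r q.2) (by fun_prop) (by fun_prop))
  have hslice : ∀ q : ℝ × ℝ, volume ((fun x : ℝ => (x, q)) ⁻¹' {p : ℝ × ℝ × ℝ |
      p.2.2 ∈ T ∧ |p.2.1| ≤ r p.2.2 ∧ |p.1 * s - p.2.1 * c| ≤ r p.2.2}) =
      {q : ℝ × ℝ | q.2 ∈ T ∧ |q.1| ≤ r q.2}.indicator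
        (fun q => ENNReal.ofReal (2 * r q.2 / s)) q := by
    intro q
    by_cases hq : q.2 ∈ T ∧ |q.1| ≤ r q.2
    · rw [Set.indicator_of_mem (by exact hq), ← volume_abs_mul_sub_le hs (q.1 * c)]
      simp [hq.1, hq.2]
    · rw [Set.indicator_of_notMem (by exact hq)]
      convert measure_empty (μ := (volume : Measure ℝ))
      ext x
      simp only [Set.mem_preimage, Set.mem_ofPred_eq, Set.mem_empty_iff_false, iff_false]
      tauto
  rw [Measure.volume_eq_prod, Measure.prod_apply_symm hS, lintegral_congr hslice,
    Measure.volume_eq_prod, lintegral_prod_symm' _ (Measurable.indicator (by fun_prop) hB),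
    ← lintegral_indicator hT]
  refine lintegral_congr fun z => ?_
  by_cases hz : z ∈ T
  · have h : (fun y : ℝ => {q : ℝ × ℝ | q.2 ∈ T ∧ |q.1| ≤ r q.2}.indicator
        (fun q => ENNReal.ofReal (2 * r q.2 / s)) (y, z)) =
        {y : ℝ | |y * 1 - 0| ≤ r z}.indicator fun _ => ENNReal.ofReal (2 * r z / s) := by
      ext y
      simp [Set.indicator, hz]
    have hm : MeasurableSet {y : ℝ | |y * 1 - 0| ≤ r z} :=
      measurableSet_le (by fun_prop) (by fun_prop)
    rw [h, lintegral_indicator_const hm, volume_abs_mul_sub_le one_pos,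
      Set.indicator_of_mem hz, ← ENNReal.ofReal_mul (by have := hr0 z; positivity)]
    congr 1
    ring
  · simp [hz]

lemma setLIntegral_ofReal_Icc {f : ℝ → ℝ} (hf : Continuous f) {a b : ℝ} (hab : a ≤ b)
    (h0 : ∀ z ∈ Set.Icc a b, 0 ≤ f z) :
    ∫⁻ z in Set.Icc a b, ENNReal.ofReal (f z) = ENNReal.ofReal (∫ z in a..b, f z) := by
  rw [intervalIntegral.integral_of_le hab, ← integral_Icc_eq_integral_Ioc,
    ofReal_integral_eq_lintegral_ofReal (hf.integrableOn_Icc)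
      ((ae_restrict_iff' measurableSet_Icc).2 (.of_forall h0))]

theorem volume_skew_bicylinder (θ : ℝ) (hθ0 : 0 < θ) (hθ1 : θ ≤ π / 2) :
    volume {p : ℝ × ℝ × ℝ |
        p.2.1 ^ 2 + p.2.2 ^ 2 ≤ 1 ∧
        (p.1 * Real.sin θ - p.2.1 * Real.cos θ) ^ 2 + p.2.2 ^ 2 ≤ 1} =
      ENNReal.ofReal (16 / (3 * Real.sin θ)) ∧
    volume {p : ℝ × ℝ × ℝ |
        |p.2.1| ≤ 1 ∧ |p.1 * Real.sin θ - p.2.1 * Real.cos θ| ≤ 1 ∧ |p.2.2| ≤ 1} =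
      ENNReal.ofReal (8 / Real.sin θ) := by
  have hs : 0 < Real.sin θ := Real.sin_pos_of_pos_of_lt_pi hθ0 (by linarith [Real.pi_pos])
  constructor
  · have hset : {p : ℝ × ℝ × ℝ | p.2.1 ^ 2 + p.2.2 ^ 2 ≤ 1 ∧
        (p.1 * Real.sin θ - p.2.1 * Real.cos θ) ^ 2 + p.2.2 ^ 2 ≤ 1} =
        {p : ℝ × ℝ × ℝ | p.2.2 ∈ Set.Icc (-1 : ℝ) 1 ∧ |p.2.1| ≤ √(1 - p.2.2 ^ 2) ∧
          |p.1 * Real.sin θ - p.2.1 * Real.cos θ| ≤ √(1 - p.2.2 ^ 2)} := by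
      ext ⟨x, y, z⟩
      simp only [Set.mem_ofPred_eq, Set.mem_Icc, ← abs_le, ← sq_le_one_iff_abs_le_one]
      constructor
      · rintro ⟨h₁, h₂⟩
        exact ⟨by nlinarith [sq_nonneg y], Real.abs_le_sqrt (by linarith),
          Real.abs_le_sqrt (by linarith)⟩
      · rintro ⟨hz, h₁, h₂⟩
        rw [Real.le_sqrt (abs_nonneg _) (by linarith), sq_abs] at h₁ h₂
        exact ⟨by linarith, by linarith⟩
    have hint : ∫ z in (-1 : ℝ)..1, 4 * (1 - z ^ 2) / Real.sin θ = 16 / (3 * Real.sin θ) := by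
      rw [intervalIntegral.integral_div, intervalIntegral.integral_const_mul,
        intervalIntegral.integral_sub (by simp) (by simp), integral_pow,
        intervalIntegral.integral_const]
      norm_num
      field_simp
    have hnonneg : ∀ z ∈ Set.Icc (-1 : ℝ) 1, 0 ≤ 1 - z ^ 2 := fun z hz => by
      nlinarith [hz.1, hz.2]
    rw [hset, volume_parallelogram_slices hs _ (r := fun z => √(1 - z ^ 2)) (by fun_prop)
      (fun _ => Real.sqrt_nonneg _) measurableSet_Icc, ← hint,
      ← setLIntegral_ofReal_Icc (by fun_prop) (by norm_num) fun z hz => by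
        have := hnonneg z hz
        positivity]
    refine setLIntegral_congr_fun measurableSet_Icc fun z hz => ?_
    simp only [Real.sq_sqrt (hnonneg z hz)]
  · have hset : {p : ℝ × ℝ × ℝ | |p.2.1| ≤ 1 ∧
        |p.1 * Real.sin θ - p.2.1 * Real.cos θ| ≤ 1 ∧ |p.2.2| ≤ 1} =
        {p : ℝ × ℝ × ℝ | p.2.2 ∈ Set.Icc (-1 : ℝ) 1 ∧ |p.2.1| ≤ 1 ∧
          |p.1 * Real.sin θ - p.2.1 * Real.cos θ| ≤ 1} := by
      ext p
      simp only [Set.mem_ofPred_eq, Set.mem_Icc, ← abs_le]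
      tauto
    rw [hset, volume_parallelogram_slices hs _ (r := fun _ => 1) measurable_const
      (fun _ => zero_le_one) measurableSet_Icc, setLIntegral_const, Real.volume_Icc,
      ← ENNReal.ofReal_mul (by positivity)]
    congr 1
    ring
end
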